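/- Let μ be a dominant integral weight of 𝔤 with μ = μ̄. Then dim((adj(𝔤) ⊗ S²V_μ)^𝔤) = Σ_{j : ⟨μ,α_j∨⟩ > 0} ((1/2)·[ϖ_j ≠ ϖ̄_j] + [ϖ_j = ϖ̄_j]·[V_μ is symplectic]) and dim((adj(𝔤) ⊗ Λ²V_μ)^𝔤) = Σ_{j : ⟨μ,α_j∨⟩ > 0} ((1/2)·[ϖ_j ≠ ϖ̄_j] + [ϖ_j = ϖ̄_j]·[V_μ is orthogonal]), where [P] denotes 1 if the condition P holds and 0 otherwise. -/

import Mathlib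

open scoped TensorProduct Classical
open LieAlgebra LieModule Module

namespace AdjPaper

variable {L : Type} [LieRing L] [LieAlgebra ℂ L]

/-- `χ` is a root of `L` relative to the Cartan subalgebra `H`: a nonzero linear functional
on `H` with nontrivial root space. -/
def IsRoot (H : LieSubalgebra ℂ L) [H.IsCartanSubalgebra] (χ : Module.Dual ℂ H) : Prop :=
  χ ≠ 0 ∧ rootSpace H ⇑χ ≠ ⊥

/-- `t` is the coroot `χ∨` of the root `χ`: it lies in `⁅𝔤_χ, 𝔤_{-χ}⁆` and satisfies
`χ t = 2`. -/
def IsCoroot (H : LieSubalgebra ℂ L) [H.IsCartanSubalgebra] (χ : Module.Dual ℂ H) (t : H) : Prop :=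
  χ t = 2 ∧ ∃ e ∈ rootSpace H ⇑χ, ∃ f ∈ rootSpace H ⇑(-χ), (t : L) = ⁅e, f⁆

/-- `α` enumerates the simple roots of a base of the root system of `(L, H)`. -/
structure IsBase (H : LieSubalgebra ℂ L) [H.IsCartanSubalgebra] {r : ℕ} (α : Fin r → Module.Dual ℂ H) : Prop where
  isRoot : ∀ j, IsRoot H (α j)
  indep : LinearIndependent ℂ α
  pos_neg : ∀ χ : Module.Dual ℂ H, IsRoot H χ →
    (∃ c : Fin r → ℕ, χ = ∑ j, (c j : ℂ) • α j) ∨ (∃ c : Fin r → ℕ, χ = -∑ j, (c j : ℂ) • α j)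

/-- `χ` is a positive root relative to the base `α`. -/
def IsPosRoot (H : LieSubalgebra ℂ L) [H.IsCartanSubalgebra] {r : ℕ} (α : Fin r → Module.Dual ℂ H)
    (χ : Module.Dual ℂ H) : Prop :=
  IsRoot H χ ∧ ∃ c : Fin r → ℕ, χ = ∑ j, (c j : ℂ) • α j

/-- A weight `μ` is dominant integral: all its pairings `⟨μ, α_j∨⟩ = μ (hc j)` with the
simple coroots `hc j` are non-negative integers. -/
def IsDomInt {H : LieSubalgebra ℂ L} {r : ℕ} (hc : Fin r → H) (μ : Module.Dual ℂ H) : Prop :=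
  ∀ j, ∃ n : ℕ, μ (hc j) = (n : ℂ)

/-- `V` is an irreducible `L`-module with highest weight `μ` (relative to the Cartan
subalgebra `H` and the base `α`): it is irreducible and possesses a nonzero vector of
`H`-weight `μ` annihilated by all positive root spaces. -/
def IsHWIrrep (H : LieSubalgebra ℂ L) [H.IsCartanSubalgebra] {r : ℕ} (α : Fin r → Module.Dual ℂ H)
    (μ : Module.Dual ℂ H) (V : Type) [AddCommGroup V] [Module ℂ V]
    [LieRingModule L V] [LieModule ℂ L V] : Prop :=
  IsSimpleOrder (LieSubmodule ℂ L V) ∧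
  ∃ v : V, v ≠ 0 ∧ (∀ x : H, ⁅(x : L), v⁆ = μ x • v) ∧
    ∀ χ : Module.Dual ℂ H, IsPosRoot H α χ → ∀ e ∈ rootSpace H ⇑χ, ⁅e, v⁆ = 0

/-- `W` is isomorphic to the dual representation `V*`: there is a nondegenerate
`𝔤`-invariant pairing `W × V → ℂ`. -/
def IsDualPair (W V : Type) [AddCommGroup W] [Module ℂ W] [LieRingModule L W]
    [AddCommGroup V] [Module ℂ V] [LieRingModule L V] : Prop :=
  ∃ B : W →ₗ[ℂ] V →ₗ[ℂ] ℂ,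
    (∀ w, (∀ v, B w v = 0) → w = 0) ∧ (∀ v, (∀ w, B w v = 0) → v = 0) ∧
    ∀ (x : L) (w : W) (v : V), B ⁅x, w⁆ v + B w ⁅x, v⁆ = 0

/-- `V` is an orthogonal representation: it has a nondegenerate invariant symmetric
bilinear form. -/
def IsOrthogonalRep (V : Type) [AddCommGroup V] [Module ℂ V] [LieRingModule L V] : Prop :=
  ∃ B : V →ₗ[ℂ] V →ₗ[ℂ] ℂ,
    (∀ v w, B v w = B w v) ∧ (∀ v, (∀ w, B v w = 0) → v = 0) ∧
    ∀ (x : L) (v w : V), B ⁅x, v⁆ w + B v ⁅x, w⁆ = 0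

/-- `V` is a symplectic representation: it has a nondegenerate invariant alternating
bilinear form. -/
def IsSymplecticRep (V : Type) [AddCommGroup V] [Module ℂ V] [LieRingModule L V] : Prop :=
  ∃ B : V →ₗ[ℂ] V →ₗ[ℂ] ℂ,
    (∀ v, B v v = 0) ∧ (∀ v, (∀ w, B v w = 0) → v = 0) ∧
    ∀ (x : L) (v w : V), B ⁅x, v⁆ w + B v ⁅x, w⁆ = 0

variable (L) in
/-- The operator on `adj(𝔤) ⊗ V ⊗ V` exchanging the two copies of `V`. -/
noncomputable def swapMap (V : Type) [AddCommGroup V] [Module ℂ V] :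
    (L ⊗[ℂ] (V ⊗[ℂ] V)) →ₗ[ℂ] (L ⊗[ℂ] (V ⊗[ℂ] V)) :=
  LinearMap.lTensor L (TensorProduct.comm ℂ V V).toLinearMap

variable (L) in
/-- The `𝔤`-invariant subspace of `adj(𝔤) ⊗ S²V`, realised inside `adj(𝔤) ⊗ V ⊗ V` as the
invariant vectors fixed by the swap of the two copies of `V`. -/
noncomputable def symSquareInvariants (V : Type) [AddCommGroup V] [Module ℂ V]
    [LieRingModule L V] [LieModule ℂ L V] : Submodule ℂ (L ⊗[ℂ] (V ⊗[ℂ] V)) :=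
  (maxTrivSubmodule ℂ L (L ⊗[ℂ] (V ⊗[ℂ] V)) : Submodule ℂ (L ⊗[ℂ] (V ⊗[ℂ] V))) ⊓
    LinearMap.ker (swapMap L V - LinearMap.id)

variable (L) in
/-- The `𝔤`-invariant subspace of `adj(𝔤) ⊗ Λ²V`, realised inside `adj(𝔤) ⊗ V ⊗ V` as the
invariant vectors anti-fixed by the swap of the two copies of `V`. -/
noncomputable def altSquareInvariants (V : Type) [AddCommGroup V] [Module ℂ V]
    [LieRingModule L V] [LieModule ℂ L V] : Submodule ℂ (L ⊗[ℂ] (V ⊗[ℂ] V)) :=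
  (maxTrivSubmodule ℂ L (L ⊗[ℂ] (V ⊗[ℂ] V)) : Submodule ℂ (L ⊗[ℂ] (V ⊗[ℂ] V))) ⊓
    LinearMap.ker (swapMap L V + LinearMap.id)


set_option linter.unusedSectionVars false


set_option linter.unusedSectionVars false

section Part1

open LieAlgebra.IsKilling

variable [FiniteDimensional ℂ L] [IsKilling ℂ L]
variable {H : LieSubalgebra ℂ L} [H.IsCartanSubalgebra]

/-- The weight attached to a root. -/
def rootWeight (χ : Module.Dual ℂ H) (h : IsRoot H χ) : Weight ℂ H L := ⟨⇑χ, h.2⟩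

lemma rootWeight_isNonZero (χ : Module.Dual ℂ H) (h : IsRoot H χ) :
    (rootWeight χ h).IsNonZero := by
  intro h0
  apply h.1
  ext x
  exact congrFun h0 x

lemma isRoot_toLinear (χ : Weight ℂ H L) (h : χ.IsNonZero) : IsRoot H (Weight.toLinear ℂ H L χ) :=
  ⟨by simpa using h, χ.genWeightSpace_ne_bot⟩

lemma IsRoot.neg {χ : Module.Dual ℂ H} (h : IsRoot H χ) : IsRoot H (-χ) := by
  have := isRoot_toLinear (-(rootWeight χ h)) (rootWeight_isNonZero χ h).neg
  exact this

lemma isPosRoot_neg_iff {r : ℕ} (α : Fin r → Module.Dual ℂ H) (χ : Module.Dual ℂ H) :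
    IsPosRoot H (-α) χ ↔ IsPosRoot H α (-χ) := by
  constructor
  · rintro ⟨h, c, hc⟩
    exact ⟨h.neg, c, by rw [hc]; simp⟩
  · rintro ⟨h, c, hc⟩
    refine ⟨by simpa using h.neg, c, ?_⟩
    rw [← neg_neg χ, hc]; simp

lemma IsBase.neg {r : ℕ} {α : Fin r → Module.Dual ℂ H} (h : IsBase H α) : IsBase H (-α) where
  isRoot j := (h.isRoot j).neg
  indep := by
    have := h.indep.units_smul (fun _ => (-1 : ℂˣ))
    convert this using 1
    ext j x; simp
  pos_neg χ hχ := by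
    rcases h.pos_neg χ hχ with ⟨c, hc⟩ | ⟨c, hc⟩
    · right; exact ⟨c, by rw [hc]; simp⟩
    · left; exact ⟨c, by rw [hc]; simp⟩

lemma IsCoroot.neg {χ : Module.Dual ℂ H} {t : H} (h : IsCoroot H χ t) : IsCoroot H (-χ) (-t) := by
  obtain ⟨h2, e, he, f, hf, ht⟩ := h
  refine ⟨by simpa using h2, f, hf, e, by simpa using he, ?_⟩
  rw [← lie_skew, ← ht]; simp

lemma decomp {r : ℕ} {α : Fin r → Module.Dual ℂ H} (hb : IsBase H α) (P : Submodule ℂ L)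
    (h0 : ∀ x : H, (x : L) ∈ P)
    (hpos : ∀ χ, IsPosRoot H α χ → ∀ e ∈ rootSpace H ⇑χ, e ∈ P)
    (hneg : ∀ χ, IsPosRoot H α χ → ∀ e ∈ rootSpace H ⇑(-χ), e ∈ P) (x : L) : x ∈ P := by
  have key := cartan_sup_iSup_rootSpace_eq_top (K := ℂ) (L := L) (H := H)
  have key2 := congrArg (fun N : LieSubmodule ℂ H L => (N : Submodule ℂ L)) key
  simp only [LieSubmodule.sup_toSubmodule, LieSubmodule.iSup_toSubmodule,
    LieSubmodule.top_toSubmodule] at key2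
  have : (⊤ : Submodule ℂ L) ≤ P := by
    rw [← key2]
    refine sup_le ?_ (iSup_le fun χ => iSup_le fun hχ => ?_)
    · intro y hy
      exact h0 ⟨y, by simpa using hy⟩
    · intro y hy
      have hr := isRoot_toLinear χ hχ
      rcases hb.pos_neg _ hr with ⟨c, hc⟩ | ⟨c, hc⟩
      · exact hpos _ ⟨hr, c, hc⟩ y hy
      · have : IsPosRoot H α (-(Weight.toLinear ℂ H L χ)) := ⟨hr.neg, c, by rw [hc]; simp⟩
        exact hneg _ this y (by simpa using hy)
  exact this trivial

/-- simultaneous eigenspaces. -/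
def wt (H : LieSubalgebra ℂ L) (W : Type) [AddCommGroup W] [Module ℂ W] [LieRingModule L W]
    [LieModule ℂ L W] (χ : Module.Dual ℂ H) : Submodule ℂ W where
  carrier := {w | ∀ h : H, ⁅(h : L), w⁆ = χ h • w}
  add_mem' := by
    intro a b ha hb h
    simp only [Set.mem_ofPred_eq] at ha hb
    rw [lie_add, ha, hb, smul_add]
  zero_mem' := by intro h; simp
  smul_mem' := by
    intro c a ha h
    simp only [Set.mem_ofPred_eq] at ha
    rw [lie_smul, ha, smul_comm]

section Mods

variable {W : Type} [AddCommGroup W] [Module ℂ W] [LieRingModule L W] [LieModule ℂ L W]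

lemma mem_wt {χ : Module.Dual ℂ H} {w : W} :
    w ∈ wt H W χ ↔ ∀ h : H, ⁅(h : L), w⁆ = χ h • w := Iff.rfl

lemma lie_mem_wt {χ ψ : Module.Dual ℂ H} {e : L} {w : W} (he : e ∈ rootSpace H ⇑χ)
    (hw : w ∈ wt H W ψ) : ⁅e, w⁆ ∈ wt H W (ψ + χ) := by
  intro h
  have h1 : ⁅(h : L), e⁆ = χ h • e := lie_eq_smul_of_mem_rootSpace he h
  rw [leibniz_lie, h1, hw h, lie_smul, smul_lie, LinearMap.add_apply, add_smul, add_comm]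

lemma wt_indep : iSupIndep (fun χ : Module.Dual ℂ H => wt H W χ) := by
  have h1 : iSupIndep fun χ : H → ℂ =>
      ⨅ i, (toEnd ℂ L W ((i : H) : L)).maxGenEigenspace (χ i) := by
    apply Module.End.independent_iInf_maxGenEigenspace_of_forall_mapsTo
    intro i j φ
    apply Module.End.mapsTo_maxGenEigenspace_of_comm
    have : ⁅(j : L), (i : L)⁆ = 0 := by
      have h2 : ⁅j, i⁆ = 0 := trivial_lie_zero H H j i
      have := congrArg (fun x : H => (x : L)) h2
      simpa using this
    ext w
    simp only [Module.End.mul_apply, toEnd_apply_apply]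
    rw [leibniz_lie, this, zero_lie, zero_add]
  have h2 := h1.comp (f := fun χ : Module.Dual ℂ H => (χ : H → ℂ)) DFunLike.coe_injective
  refine h2.mono ?_
  intro χ w hw
  simp only [Function.comp, Submodule.mem_iInf]
  intro i
  rw [Module.End.mem_maxGenEigenspace]
  exact ⟨1, by simp [hw i]⟩

/-- If `w` has weight `χ` and lies in the sum of the weight spaces for a family not
containing `χ`, it vanishes. -/
lemma wt_eq_zero {ι : Type} (f : ι → Module.Dual ℂ H) {χ : Module.Dual ℂ H}
    (hχ : ∀ i, f i ≠ χ) {w : W} (hw : w ∈ wt H W χ) (hw' : w ∈ ⨆ i, wt H W (f i)) : w = 0 := by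
  have := (wt_indep (H := H) (W := W)) χ
  rw [Submodule.disjoint_def] at this
  have h2 : (⨆ i, wt H W (f i)) ≤ ⨆ j, ⨆ (_ : j ≠ χ), wt H W j :=
    iSup_le fun i => le_iSup₂_of_le (f i) (hχ i) le_rfl
  exact this w hw (h2 hw')

/-- `w` is killed by the positive root spaces. -/
def IsSing (H : LieSubalgebra ℂ L) [H.IsCartanSubalgebra] {r : ℕ} (α : Fin r → Module.Dual ℂ H)
    (w : W) : Prop :=
  ∀ χ : Module.Dual ℂ H, IsPosRoot H α χ → ∀ e ∈ rootSpace H ⇑χ, ⁅e, w⁆ = 0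

lemma exists_delta {r : ℕ} {α : Fin r → Module.Dual ℂ H} (hb : IsBase H α) :
    ∃ δ : H, ∀ j, α j δ = 1 := by
  obtain ⟨g, hg⟩ := LinearMap.exists_extend ((Basis.span hb.indep).constr ℂ (fun _ => (1 : ℂ)))
  refine ⟨(Module.evalEquiv ℂ H).symm g, fun j => ?_⟩
  rw [Module.apply_evalEquiv_symm_apply]
  have h1 := congrArg (fun f => f (Basis.span hb.indep j)) hg
  simp only [LinearMap.comp_apply, Basis.constr_basis] at h1
  rw [← h1]
  congr 1
  simp [Basis.span_apply]

/-- Every nonzero finite-dimensional module has a singular weight vector. -/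
lemma exists_sing [FiniteDimensional ℂ W] [Nontrivial W] {r : ℕ} {α : Fin r → Module.Dual ℂ H}
    (hb : IsBase H α) :
    ∃ (χ : Module.Dual ℂ H) (w : W), w ≠ 0 ∧ w ∈ wt H W χ ∧ IsSing H α w := by
  obtain ⟨δ, hδ⟩ := exists_delta hb
  set D := toEnd ℂ L W (δ : L) with hD
  obtain ⟨z0, hz0⟩ := Module.End.exists_eigenvalue D
  have hfin : {k : ℕ | D.HasEigenvalue (z0 + k)}.Finite := by
    have h1 : (Set.ofPred D.HasEigenvalue).Finite := by
      have := Module.End.finite_hasEigenvalue D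
      exact this
    refine Set.Finite.preimage (f := fun k : ℕ => z0 + (k : ℂ)) ?_ h1
    intro a _ b _ hab
    simpa using hab
  have hne : hfin.toFinset.Nonempty := ⟨0, by simpa using hz0⟩
  obtain ⟨k, hk, hmax⟩ := hfin.toFinset.exists_max_image id hne
  have hk' : D.HasEigenvalue (z0 + k) := by simpa using hk
  let E : LieSubmodule ℂ H W :=
    { D.eigenspace (z0 + k) with
      lie_mem := by
        intro x m hm
        have hm' : m ∈ D.eigenspace (z0 + k) := hm
        change ⁅(x : L), m⁆ ∈ D.eigenspace (z0 + k)
        rw [Module.End.mem_eigenspace_iff] at hm' ⊢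
        simp only [hD, toEnd_apply_apply] at hm' ⊢
        have : ⁅(δ : L), (x : L)⁆ = 0 := by
          have h2 : ⁅δ, x⁆ = 0 := trivial_lie_zero H H δ x
          have := congrArg (fun x : H => (x : L)) h2
          simpa using this
        rw [leibniz_lie, this, zero_lie, zero_add, hm', lie_smul] }
  obtain ⟨m, hm⟩ := hk'.exists_hasEigenvector
  have : Nontrivial E := ⟨⟨⟨m, hm.1⟩, 0, fun h => hm.2 (congrArg Subtype.val h)⟩⟩
  obtain ⟨χ, hχ⟩ := exists_nontrivial_weightSpace_of_isNilpotent ℂ H E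
  obtain ⟨⟨⟨w, hwE⟩, hw⟩, hw0⟩ := exists_ne (0 : weightSpace E χ)
  rw [mem_weightSpace] at hw
  refine ⟨χ, w, ?_, ?_, ?_⟩
  · rintro rfl
    exact hw0 rfl
  · intro h
    have := congrArg Subtype.val (hw h)
    exact this
  · intro ψ hψ e he
    by_contra hcon
    obtain ⟨hr, c, hc⟩ := hψ
    have hwE' : w ∈ D.eigenspace (z0 + k) := hwE
    rw [Module.End.mem_eigenspace_iff] at hwE'
    have h1 : ⁅(δ : L), e⁆ = ψ δ • e := lie_eq_smul_of_mem_rootSpace he δ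
    have h2 : ψ δ = ((∑ j, c j : ℕ) : ℂ) := by
      rw [hc]; simp [hδ]
    have h3 : D ⁅e, w⁆ = (z0 + ((k + ∑ j, c j : ℕ) : ℂ)) • ⁅e, w⁆ := by
      simp only [hD, toEnd_apply_apply] at hwE' ⊢
      rw [leibniz_lie, h1, hwE', h2, lie_smul, smul_lie, ← add_smul]
      congr 1; push_cast; ring
    have h4 : D.HasEigenvalue (z0 + ((k + ∑ j, c j : ℕ) : ℂ)) :=
      Module.End.hasEigenvalue_of_hasEigenvector
        ⟨Module.End.mem_eigenspace_iff.mpr h3, hcon⟩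
    have h5 := hmax (k + ∑ j, c j) (by simpa using h4)
    have h6 : ∑ j, c j = 0 := by simpa using h5
    apply hr.1
    rw [hc]
    refine Finset.sum_eq_zero fun j hj => ?_
    have := (Finset.sum_eq_zero_iff.mp h6) j hj
    simp [this]

/-- Elements obtained from `v` by applying elements of negative root spaces. -/
inductive Words (H : LieSubalgebra ℂ L) [H.IsCartanSubalgebra] {r : ℕ}
    (α : Fin r → Module.Dual ℂ H) (v : W) : W → Prop
  | base : Words H α v v
  | step (χ : Module.Dual ℂ H) (hχ : IsPosRoot H α χ) (f : L) (hf : f ∈ rootSpace H ⇑(-χ)) (w : W)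
      (hw : Words H α v w) : Words H α v ⁅f, w⁆

/-- The span of words is everything when the module is irreducible, in the form: any vector
in the Lie submodule generated by `v` is in the span of the words. -/
lemma words_span {r : ℕ} {α : Fin r → Module.Dual ℂ H}
    (hb : IsBase H α) {μ : Module.Dual ℂ H} {v : W} (hv : v ∈ wt H W μ) (hs : IsSing H α v)
    (x : W) (hx : x ∈ LieSubmodule.lieSpan ℂ L {v}) :
    x ∈ Submodule.span ℂ {w | Words H α v w} := by
  set P := Submodule.span ℂ {w | Words H α v w} with hP
  have hstab : ∀ χ, IsPosRoot H α χ → ∀ f ∈ rootSpace H ⇑(-χ), ∀ w ∈ P, ⁅f, w⁆ ∈ P := by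
    intro χ hχ f hf w hw
    induction hw using Submodule.span_induction with
    | mem w hw => exact Submodule.subset_span (Words.step χ hχ f hf w hw)
    | zero => simp
    | add a b _ _ ha hb => rw [lie_add]; exact P.add_mem ha hb
    | smul c a _ ha => rw [lie_smul]; exact P.smul_mem c ha
  have hword : ∀ w, Words H α v w → ∀ y : L, ⁅y, w⁆ ∈ P := by
    intro w hw
    induction hw with
    | base =>
      intro y
      let P' : Submodule ℂ L := P.comap ((toModuleHom ℂ L W).toLinearMap ∘ₗ
        (TensorProduct.mk ℂ L W).flip v)
      have hmem : ∀ y, y ∈ P' ↔ ⁅y, v⁆ ∈ P := by intro y; simp [P']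
      have hvP : v ∈ P := Submodule.subset_span Words.base
      refine (hmem y).mp (decomp hb P' ?_ ?_ ?_ y)
      · intro h
        rw [hmem, hv h]
        exact P.smul_mem _ hvP
      · intro χ hχ e he
        rw [hmem, hs χ hχ e he]; exact P.zero_mem
      · intro χ hχ e he
        rw [hmem]
        exact hstab χ hχ e he v hvP
    | step χ hχ f hf w hw ih =>
      intro y
      rw [leibniz_lie]
      exact P.add_mem (ih _) (hstab χ hχ f hf _ (ih y))
  let N : LieSubmodule ℂ L W :=
    { P with
      lie_mem := by
        intro y m hm
        have hm' : m ∈ P := hm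
        change ⁅y, m⁆ ∈ P
        induction hm' using Submodule.span_induction with
        | mem w hw => exact hword w hw y
        | zero => simp
        | add a b ha' hb' ha hb => rw [lie_add]; exact P.add_mem (ha ha') (hb hb')
        | smul c a ha' ha => rw [lie_smul]; exact P.smul_mem c (ha ha') }
  have hle : LieSubmodule.lieSpan ℂ L {v} ≤ N := by
    rw [LieSubmodule.lieSpan_le]
    rintro _ rfl
    exact Submodule.subset_span Words.base
  exact hle hx

/-- nonnegative integral combination of the simple roots -/
noncomputable def Qs {r : ℕ} (α : Fin r → Module.Dual ℂ H) (c : Fin r → ℕ) : Module.Dual ℂ H :=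
  ∑ j, (c j : ℂ) • α j

lemma Qs_add {r : ℕ} (α : Fin r → Module.Dual ℂ H) (c d : Fin r → ℕ) :
    Qs α (c + d) = Qs α c + Qs α d := by
  simp [Qs, add_smul, Finset.sum_add_distrib]

lemma Qs_zero {r : ℕ} (α : Fin r → Module.Dual ℂ H) : Qs α 0 = 0 := by simp [Qs]

lemma Qs_inj {r : ℕ} {α : Fin r → Module.Dual ℂ H} (hb : IsBase H α) {c d : Fin r → ℕ}
    (h : Qs α c = Qs α d) : c = d := by
  have h1 := hb.indep
  rw [Fintype.linearIndependent_iff] at h1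
  have h2 := h1 (fun j => (c j : ℂ) - d j) (by
    simp only [sub_smul, Finset.sum_sub_distrib]
    exact sub_eq_zero.mpr h)
  ext j
  have := sub_eq_zero.mp (h2 j)
  exact_mod_cast this

lemma words_cases {r : ℕ} {α : Fin r → Module.Dual ℂ H}
    (hb : IsBase H α) {μ : Module.Dual ℂ H} {v : W} (hv : v ∈ wt H W μ) (w : W)
    (hw : Words H α v w) :
    w = v ∨ ∃ c : Fin r → ℕ, c ≠ 0 ∧ w ∈ wt H W (μ - Qs α c) := by
  induction hw with
  | base => left; rfl
  | step χ hχ f hf w hw ih =>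
    right
    obtain ⟨hr, d, hd⟩ := hχ
    have hd' : χ = Qs α d := hd
    have hd0 : d ≠ 0 := by
      rintro rfl
      exact hr.1 (by rw [hd', Qs_zero])
    rcases ih with rfl | ⟨c, hc, hwc⟩
    · refine ⟨d, hd0, ?_⟩
      have := lie_mem_wt hf hv
      rwa [← sub_eq_add_neg, hd'] at this
    · refine ⟨c + d, ?_, ?_⟩
      · intro h
        apply hd0
        ext j
        have := congrFun h j
        simp at this ⊢; omega
      · have := lie_mem_wt hf hwc
        rwa [← sub_eq_add_neg, hd', sub_sub, ← Qs_add] at this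

/-- The Lie submodule generated by a singular vector. -/
lemma lieSpan_sing_le {r : ℕ} {α : Fin r → Module.Dual ℂ H}
    (hb : IsBase H α) {μ : Module.Dual ℂ H} {v : W} (hv : v ∈ wt H W μ) (hs : IsSing H α v)
    (x : W) (hx : x ∈ LieSubmodule.lieSpan ℂ L {v}) :
    x ∈ Submodule.span ℂ {v} ⊔ ⨆ c : {c : Fin r → ℕ // c ≠ 0}, wt H W (μ - Qs α c.1) := by
  have h0 := words_span hb hv hs x hx
  revert h0 x
  suffices h : Submodule.span ℂ {w | Words H α v w} ≤ Submodule.span ℂ {v} ⊔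
      ⨆ c : {c : Fin r → ℕ // c ≠ 0}, wt H W (μ - Qs α c.1) from fun x _ h0 => h h0
  rw [Submodule.span_le]
  intro w hw
  rcases words_cases hb hv w hw with rfl | ⟨c, hc, hwc⟩
  · exact Submodule.mem_sup_left (Submodule.mem_span_singleton_self _)
  · refine Submodule.mem_sup_right ?_
    exact Submodule.mem_iSup_of_mem (⟨c, hc⟩ : {c : Fin r → ℕ // c ≠ 0}) hwc

/-- A weight-`μ` vector in `ℂ v ⊕ (lower weights)` is a multiple of `v`. -/
lemma wt_top_mult {r : ℕ} {α : Fin r → Module.Dual ℂ H}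
    (hb : IsBase H α) {μ : Module.Dual ℂ H} {v : W} (hv : v ∈ wt H W μ)
    {x : W} (hx : x ∈ Submodule.span ℂ {v} ⊔
      ⨆ c : {c : Fin r → ℕ // c ≠ 0}, wt H W (μ - Qs α c.1)) (hxw : x ∈ wt H W μ) :
    ∃ a : ℂ, x = a • v := by
  obtain ⟨y, hy, z, hz, rfl⟩ := Submodule.mem_sup.mp hx
  obtain ⟨a, rfl⟩ := Submodule.mem_span_singleton.mp hy
  refine ⟨a, ?_⟩
  have : z = 0 := by
    refine wt_eq_zero (fun c : {c : Fin r → ℕ // c ≠ 0} => μ - Qs α c.1) ?_ ?_ hz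
      (χ := μ)
    · rintro ⟨c, hc⟩ h
      apply hc
      apply Qs_inj hb
      rw [Qs_zero]
      simpa using h
    · have h1 := (wt H W μ).sub_mem hxw ((wt H W μ).smul_mem a hv)
      simpa using h1
  rw [this, add_zero]

end Mods
end Part1


section Part2

open LieAlgebra.IsKilling

variable [FiniteDimensional ℂ L] [IsKilling ℂ L]
variable {H : LieSubalgebra ℂ L} [H.IsCartanSubalgebra]

variable (H) in
/-- index set of the adapted basis -/
abbrev Idx : Type := Σ χ : Weight ℂ H L, Fin (finrank ℂ (rootSpace H ⇑χ))

variable (H) in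
lemma internal_root : DirectSum.IsInternal
    (fun χ : Weight ℂ H L => (rootSpace H ⇑χ : LieSubmodule ℂ H L).toSubmodule) := by
  apply DirectSum.isInternal_submodule_of_iSupIndep_of_iSup_eq_top
  · have := LieModule.iSupIndep_genWeightSpace' ℂ H L
    exact LieSubmodule.iSupIndep_toSubmodule.mpr this
  · have := LieModule.iSup_genWeightSpace_eq_top' ℂ H L
    rw [← LieSubmodule.iSup_toSubmodule, this, LieSubmodule.top_toSubmodule]

variable (H) in
/-- adapted basis -/
noncomputable def bas : Basis (Idx H) ℂ L :=
  (internal_root H).collectedBasis (fun χ => Module.finBasis ℂ (rootSpace H ⇑χ))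

lemma bas_mem (i : Idx H) : bas H i ∈ rootSpace H ⇑i.1 :=
  (internal_root H).collectedBasis_mem (fun χ => Module.finBasis ℂ (rootSpace H ⇑χ)) i

variable (H) in
/-- dual basis -/
noncomputable def dbas : Basis (Idx H) ℂ L :=
  LinearMap.BilinForm.dualBasis (killingForm ℂ L) (IsKilling.killingForm_nondegenerate ℂ L) (bas H)

lemma kf_dbas_bas (i j : Idx H) : killingForm ℂ L (dbas H i) (bas H j) = if j = i then 1 else 0 :=
  LinearMap.BilinForm.apply_dualBasis_left _ _ _ _

lemma kf_comm (x y : L) : killingForm ℂ L x y = killingForm ℂ L y x :=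
  LieModule.traceForm_comm ℂ L L x y

lemma dbas_expand (x : L) : x = ∑ i, killingForm ℂ L x (bas H i) • dbas H i := by
  conv_lhs => rw [← (dbas H).sum_repr x]
  refine Finset.sum_congr rfl fun i _ => ?_
  congr 1
  exact LinearMap.BilinForm.dualBasis_repr_apply _ _ _ _

lemma bas_expand (x : L) : x = ∑ i, killingForm ℂ L x (dbas H i) • bas H i := by
  conv_lhs => rw [← (bas H).sum_repr x]
  refine Finset.sum_congr rfl fun i _ => ?_
  congr 1
  conv_rhs => rw [← (bas H).sum_repr x]
  rw [map_sum, LinearMap.sum_apply]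
  simp only [map_smul, LinearMap.smul_apply]
  rw [Finset.sum_eq_single i]
  · rw [kf_comm, kf_dbas_bas]; simp
  · intro j _ hj
    rw [kf_comm, kf_dbas_bas]; simp [hj]
  · simp

lemma dbas_mem (i : Idx H) : dbas H i ∈ rootSpace H ⇑(-i.1) := by
  apply LieModule.weightSpace_le_genWeightSpace
  rw [mem_weightSpace]
  intro h
  change ⁅(h : L), dbas H i⁆ = _
  rw [dbas_expand (H := H) ⁅(h : L), dbas H i⁆]
  have : ∀ j, killingForm ℂ L ⁅(h : L), dbas H i⁆ (bas H j) = if j = i then - i.1 h else 0 := by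
    intro j
    have h1 : killingForm ℂ L ⁅(h : L), dbas H i⁆ (bas H j)
        = - killingForm ℂ L (dbas H i) ⁅(h : L), bas H j⁆ := by
      rw [← lie_skew, map_neg, LinearMap.neg_apply]
      congr 1
      exact LieModule.traceForm_apply_lie_apply ℂ L L _ _ _
    have h2 : ⁅(h : L), bas H j⁆ = j.1 h • bas H j := lie_eq_smul_of_mem_rootSpace (bas_mem j) h
    rw [h1, h2, map_smul, kf_dbas_bas]
    split_ifs with hij
    · subst hij; simp
    · simp
  simp [this]

section Mods
variable {W : Type} [AddCommGroup W] [Module ℂ W] [LieRingModule L W] [LieModule ℂ L W]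

variable (H W) in
/-- Casimir operator -/
noncomputable def cas : W →ₗ[ℂ] W :=
  ∑ i : Idx H, toEnd ℂ L W (bas H i) ∘ₗ toEnd ℂ L W (dbas H i)

lemma cas_apply (w : W) : cas H W w = ∑ i : Idx H, ⁅bas H i, ⁅dbas H i, w⁆⁆ := by
  simp [cas, LinearMap.sum_apply]

lemma cas_lie (y : L) (w : W) : cas H W ⁅y, w⁆ = ⁅y, cas H W w⁆ := by
  rw [cas_apply, cas_apply, lie_sum]
  have e1 : ∀ i : Idx H, ⁅y, ⁅bas H i, ⁅dbas H i, w⁆⁆⁆ =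
      ⁅⁅y, bas H i⁆, ⁅dbas H i, w⁆⁆ + ⁅bas H i, ⁅⁅y, dbas H i⁆, w⁆⁆
        + ⁅bas H i, ⁅dbas H i, ⁅y, w⁆⁆⁆ := by
    intro i
    rw [leibniz_lie y (bas H i), leibniz_lie y (dbas H i), lie_add, add_assoc]
  simp only [e1, Finset.sum_add_distrib]
  suffices h : ∑ i : Idx H, ⁅⁅y, bas H i⁆, ⁅dbas H i, w⁆⁆ +
      ∑ i : Idx H, ⁅bas H i, ⁅⁅y, dbas H i⁆, w⁆⁆ = 0 by
    rw [h, zero_add]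
  have e2 : ∀ i : Idx H, ⁅⁅y, bas H i⁆, ⁅dbas H i, w⁆⁆ =
      ∑ j : Idx H, killingForm ℂ L ⁅y, bas H i⁆ (dbas H j) • ⁅bas H j, ⁅dbas H i, w⁆⁆ := by
    intro i
    conv_lhs => rw [bas_expand (H := H) ⁅y, bas H i⁆]
    rw [sum_lie]
    simp
  have e3 : ∀ i : Idx H, ⁅bas H i, ⁅⁅y, dbas H i⁆, w⁆⁆ =
      ∑ j : Idx H, killingForm ℂ L ⁅y, dbas H i⁆ (bas H j) • ⁅bas H i, ⁅dbas H j, w⁆⁆ := by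
    intro i
    conv_lhs => rw [dbas_expand (H := H) ⁅y, dbas H i⁆]
    rw [sum_lie, lie_sum]
    simp
  simp only [e2, e3]
  rw [Finset.sum_comm, ← Finset.sum_add_distrib]
  refine Finset.sum_eq_zero fun i _ => ?_
  rw [← Finset.sum_add_distrib]
  refine Finset.sum_eq_zero fun j _ => ?_
  rw [← add_smul]
  have : killingForm ℂ L ⁅y, bas H j⁆ (dbas H i) + killingForm ℂ L ⁅y, dbas H i⁆ (bas H j) = 0 := by
    rw [← lie_skew, map_neg, LinearMap.neg_apply,
      show killingForm ℂ L ⁅bas H j, y⁆ (dbas H i) = killingForm ℂ L (bas H j) ⁅y, dbas H i⁆ from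
        LieModule.traceForm_apply_lie_apply ℂ L L _ _ _, kf_comm]
    simp
  rw [this, zero_smul]

/-- naturality of the Casimir -/
lemma cas_map {W' : Type} [AddCommGroup W'] [Module ℂ W'] [LieRingModule L W'] [LieModule ℂ L W']
    (g : W →ₗ⁅ℂ, L⁆ W') (w : W) : cas H W' (g w) = g (cas H W w) := by
  simp [cas_apply]

/-- The form on the dual of the Cartan subalgebra. -/
noncomputable def fm (l n : Module.Dual ℂ H) : ℂ := l ((cartanEquivDual H).symm n)

lemma traceForm_t (n : Module.Dual ℂ H) (h : H) :
    killingForm ℂ L ((cartanEquivDual H).symm n : H) (h : L) = n h := by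
  have := congrArg (fun f => f h) ((cartanEquivDual H).apply_symm_apply n)
  exact this

lemma fm_comm (l n : Module.Dual ℂ H) : fm l n = fm n l := by
  unfold fm
  rw [← traceForm_t l, ← traceForm_t n, kf_comm]

lemma fm_add_left (a b c : Module.Dual ℂ H) : fm (a + b) c = fm a c + fm b c := by simp [fm]
lemma fm_sub_left (a b c : Module.Dual ℂ H) : fm (a - b) c = fm a c - fm b c := by simp [fm]
lemma fm_add_right (a b c : Module.Dual ℂ H) : fm a (b + c) = fm a b + fm a c := by simp [fm]
lemma fm_sub_right (a b c : Module.Dual ℂ H) : fm a (b - c) = fm a b - fm a c := by simp [fm]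
lemma fm_smul_left (z : ℂ) (b c : Module.Dual ℂ H) : fm (z • b) c = z * fm b c := by simp [fm]
lemma fm_sum_left {ι : Type} (s : Finset ι) (f : ι → Module.Dual ℂ H) (c : Module.Dual ℂ H) :
    fm (∑ i ∈ s, f i) c = ∑ i ∈ s, fm (f i) c := by simp [fm]

/-- positive weights -/
noncomputable def posI {r : ℕ} (α : Fin r → Module.Dual ℂ H) : Finset (Idx H) :=
  Finset.univ.filter (fun i => IsPosRoot H α (Weight.toLinear ℂ H L i.1))

/-- twice rho -/
noncomputable def rho2 {r : ℕ} (α : Fin r → Module.Dual ℂ H) : Module.Dual ℂ H :=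
  ∑ i ∈ posI α, Weight.toLinear ℂ H L i.1

/-- value of the Casimir on a singular vector -/
noncomputable def casVal {r : ℕ} (α : Fin r → Module.Dual ℂ H) (l : Module.Dual ℂ H) : ℂ :=
  fm l l + fm l (rho2 α)

lemma rootSpace_zero_mem {x : L} (hx : x ∈ rootSpace H (0 : H → ℂ)) : x ∈ H := by
  rw [rootSpace_zero_eq] at hx
  simpa using hx

lemma kf_H_zero (h : H) {χ : Weight ℂ H L} (hχ : χ.IsNonZero) {x : L} (hx : x ∈ rootSpace H ⇑χ) :
    killingForm ℂ L (h : L) x = 0 := by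
  have h0 : (h : L) ∈ rootSpace H (0 : H → ℂ) := by
    rw [rootSpace_zero_eq]; simp
  refine killingForm_apply_eq_zero_of_mem_rootSpace_of_add_ne_zero ℂ L H h0 hx ?_
  rw [zero_add]
  exact hχ

lemma cas_sing {r : ℕ} {α : Fin r → Module.Dual ℂ H} (hb : IsBase H α) {l : Module.Dual ℂ H}
    {w : W} (hw : w ∈ wt H W l) (hs : IsSing H α w) : cas H W w = casVal α l • w := by
  have key : ∀ i : Idx H, ⁅bas H i, ⁅dbas H i, w⁆⁆ =
      ((if i ∈ posI α then fm l (Weight.toLinear ℂ H L i.1) else 0) +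
        killingForm ℂ L ((cartanEquivDual H).symm l : H) (dbas H i) *
          killingForm ℂ L ((cartanEquivDual H).symm l : H) (bas H i)) • w := by
    intro i
    have hbm := bas_mem i
    have hdm := dbas_mem i
    by_cases h0 : i.1.IsZero
    · have hnp : i ∉ posI α := by
        simp only [posI, Finset.mem_filter, Finset.mem_univ, true_and]
        intro hp
        apply hp.1.1
        ext x
        exact congrFun h0 x
      have hb' : bas H i ∈ H := by
        apply rootSpace_zero_mem
        rwa [show ⇑i.1 = 0 from h0] at hbm
      have hd' : dbas H i ∈ H := by
        apply rootSpace_zero_mem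
        rwa [Weight.coe_neg, show ⇑i.1 = 0 from h0, neg_zero] at hdm
      rw [if_neg hnp, zero_add, show dbas H i = ((⟨dbas H i, hd'⟩ : H) : L) from rfl,
        show bas H i = ((⟨bas H i, hb'⟩ : H) : L) from rfl, hw, lie_smul, hw, smul_smul]
      rw [traceForm_t, traceForm_t]
    · have z1 := kf_H_zero ((cartanEquivDual H).symm l) h0 hbm
      rw [z1, mul_zero, add_zero]
      have hr := isRoot_toLinear _ h0
      by_cases hp : i ∈ posI α
      · have hp' : IsPosRoot H α (Weight.toLinear ℂ H L i.1) := by simpa [posI] using hp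
        rw [leibniz_lie, hs _ hp' _ hbm, lie_zero, add_zero, if_pos hp]
        have h1 := lie_eq_killingForm_smul_of_mem_rootSpace_of_mem_rootSpace_neg (α := i.1) hbm
          (by simpa using hdm)
        have h2 : killingForm ℂ L (bas H i) (dbas H i) = 1 := by
          rw [kf_comm, kf_dbas_bas]; simp
        rw [h1, h2, one_smul, hw]
        rfl
      · have hp' : IsPosRoot H α (-(Weight.toLinear ℂ H L i.1)) := by
          refine ⟨hr.neg, ?_⟩
          rcases hb.pos_neg _ hr with ⟨c, hc⟩ | ⟨c, hc⟩
          · exact absurd (by simpa [posI] using ⟨hr, c, hc⟩) hp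
          · exact ⟨c, by rw [hc]; simp⟩
        rw [hs _ hp' _ hdm, if_neg hp]
        simp
  rw [cas_apply]
  simp only [key]
  rw [← Finset.sum_smul, Finset.sum_add_distrib, casVal, add_comm]
  congr 2
  · rw [fm, ← traceForm_t l]
    have h3 : ∀ x y : L, killingForm ℂ L x y =
        ∑ i : Idx H, killingForm ℂ L y (dbas H i) * killingForm ℂ L x (bas H i) := by
      intro x y
      conv_lhs => rw [bas_expand (H := H) y]
      rw [map_sum]
      simp
    rw [h3]
  · rw [Finset.sum_ite_mem, Finset.univ_inter, rho2, fm_comm, fm_sum_left]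
    exact Finset.sum_congr rfl fun i _ => fm_comm _ _

end Mods
end Part2


section Part3

open LieAlgebra.IsKilling

variable [FiniteDimensional ℂ L] [IsKilling ℂ L]
variable {H : LieSubalgebra ℂ L} [H.IsCartanSubalgebra]

lemma coroot_eq {χ : Module.Dual ℂ H} {t : H} (hr : IsRoot H χ) (h : IsCoroot H χ t) :
    t = coroot (rootWeight χ hr) := by
  apply eq_coroot_of_mem_corootSpace_of_two
  · rw [mem_corootSpace]
    obtain ⟨_, e, he, f, hf, ht⟩ := h
    exact Submodule.subset_span ⟨e, he, f, hf, ht.symm⟩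
  · exact h.1

lemma fm_root_ne {χ : Module.Dual ℂ H} (hr : IsRoot H χ) : fm χ χ ≠ 0 :=
  root_apply_cartanEquivDual_symm_ne_zero (rootWeight_isNonZero χ hr)

lemma coroot_smul {χ : Module.Dual ℂ H} {t : H} (hr : IsRoot H χ) (h : IsCoroot H χ t) :
    t = (2 * (fm χ χ)⁻¹) • (cartanEquivDual H).symm χ := by
  rw [coroot_eq hr h, coroot, mul_smul, ← Nat.cast_smul_eq_nsmul ℂ 2]
  rfl

lemma fm_right_root {χ : Module.Dual ℂ H} {t : H} (hr : IsRoot H χ) (h : IsCoroot H χ t)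
    (n : Module.Dual ℂ H) : fm n χ = n t * (fm χ χ / 2) := by
  have h0 := fm_root_ne hr
  rw [coroot_smul hr h, map_smul, smul_eq_mul, show n ((cartanEquivDual H).symm χ) = fm n χ from rfl]
  field_simp

lemma fm_root_pos {χ : Module.Dual ℂ H} {t : H} (hr : IsRoot H χ) (h : IsCoroot H χ t) :
    ∃ k : ℝ, 0 < k ∧ fm χ χ = k := by
  have h0 := fm_root_ne hr
  have e1 : traceForm ℂ H L t t = 4 * (fm χ χ)⁻¹ := by
    have h1 := traceForm_coroot (rootWeight χ hr) t
    rw [← coroot_eq hr h] at h1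
    rw [h1, show (rootWeight χ hr) t = χ t from rfl, h.1]
    rw [show (rootWeight χ hr) ((cartanEquivDual H).symm (rootWeight χ hr)) = fm χ χ from rfl]
    simp; ring
  have e2 : ∃ s : ℝ, 0 ≤ s ∧ traceForm ℂ H L t t = s := by
    rw [traceForm_eq_sum_finrank_nsmul_mul]
    have : ∀ ψ : Weight ℂ H L, ∃ m : ℤ, ψ t = m := fun ψ => by
      rw [coroot_eq hr h]
      exact ⟨_, apply_coroot_eq_cast _ _⟩
    choose m hm using this
    refine ⟨∑ ψ : Weight ℂ H L, (finrank ℂ (genWeightSpace L ψ) : ℝ) * ((m ψ : ℝ) * (m ψ : ℝ)),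
      ?_, ?_⟩
    · exact Finset.sum_nonneg fun ψ _ => mul_nonneg (by positivity) (mul_self_nonneg _)
    · push_cast
      refine Finset.sum_congr rfl fun ψ _ => ?_
      rw [hm ψ, nsmul_eq_mul]
  obtain ⟨s, hs, hs'⟩ := e2
  have hs0 : s ≠ 0 := by
    rintro rfl
    rw [hs'] at e1
    have := inv_ne_zero h0
    simp at e1
    exact h0 e1
  have hsc : (s : ℂ) ≠ 0 := by exact_mod_cast hs0
  refine ⟨4 / s, by positivity, ?_⟩
  rw [hs'] at e1
  push_cast
  rw [e1]
  field_simp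

lemma pos_mult {r : ℕ} {α : Fin r → Module.Dual ℂ H} (hb : IsBase H α) (j : Fin r)
    (χ : Weight ℂ H L) (hχ : IsPosRoot H α (Weight.toLinear ℂ H L χ)) (k : ℂ)
    (hk : Weight.toLinear ℂ H L χ = k • α j) : χ = rootWeight (α j) (hb.isRoot j) := by
  have hnz : χ.IsNonZero := by
    have := hχ.1.1
    simpa using this
  rcases eq_neg_or_eq_of_eq_smul (rootWeight (α j) (hb.isRoot j)) χ hnz k (by
    have := congrArg (fun f : Module.Dual ℂ H => (f : H → ℂ)) hk
    exact this) with h | h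
  · exfalso
    have h1 : Weight.toLinear ℂ H L χ = - α j := by
      rw [h]; rfl
    obtain ⟨hr, c, hc⟩ := hχ
    have h2 := hb.indep
    rw [Fintype.linearIndependent_iff] at h2
    have h3 := h2 (fun i => (c i : ℂ) + if i = j then 1 else 0) (by
      simp only [add_smul, Finset.sum_add_distrib, ← hc, h1]
      simp) j
    simp only [if_true] at h3
    have : (c j : ℂ) + 1 = ((c j + 1 : ℕ) : ℂ) := by push_cast; rfl
    rw [this] at h3
    norm_cast at h3
  · exact h

lemma refl_pos {r : ℕ} {α : Fin r → Module.Dual ℂ H} (hb : IsBase H α) (j : Fin r)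
    (χ : Weight ℂ H L) (hχ : IsPosRoot H α (Weight.toLinear ℂ H L χ))
    (hne : χ ≠ rootWeight (α j) (hb.isRoot j)) :
    IsPosRoot H α (Weight.toLinear ℂ H L (reflectRoot (rootWeight (α j) (hb.isRoot j)) χ)) := by
  set s := reflectRoot (rootWeight (α j) (hb.isRoot j)) χ with hs
  have hnz : χ.IsNonZero := by
    have := hχ.1.1
    simpa using this
  have hsr : IsRoot H (Weight.toLinear ℂ H L s) :=
    isRoot_toLinear _ (reflectRoot_isNonZero _ _ hnz)
  refine ⟨hsr, ?_⟩
  rcases hb.pos_neg _ hsr with h | ⟨d, hd⟩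
  · exact h
  · exfalso
    set z : ℂ := χ (coroot (rootWeight (α j) (hb.isRoot j))) with hz
    have e1 : Weight.toLinear ℂ H L s = Weight.toLinear ℂ H L χ - z • α j := rfl
    obtain ⟨hr, c, hc⟩ := id hχ
    have h2 := hb.indep
    rw [Fintype.linearIndependent_iff] at h2
    have h3 := h2 (fun i => (c i : ℂ) + d i - if i = j then z else 0) (by
      simp only [add_smul, sub_smul, Finset.sum_add_distrib, Finset.sum_sub_distrib, ← hc]
      have : ∑ x, (d x : ℂ) • α x = - Weight.toLinear ℂ H L s := by rw [hd]; simp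
      rw [this, e1]
      simp)
    have h4 : ∀ i, i ≠ j → c i = 0 := by
      intro i hi
      have := h3 i
      simp only [hi, if_false, sub_zero] at this
      norm_cast at this
      omega
    apply hne
    refine pos_mult hb j χ hχ (c j) ?_
    rw [hc]
    refine Finset.sum_eq_single j (fun i _ hi => by simp [h4 i hi]) (by simp)

lemma rho2_coroot {r : ℕ} {α : Fin r → Module.Dual ℂ H} {hc : Fin r → H} (hb : IsBase H α)
    (hcr : ∀ j, IsCoroot H (α j) (hc j)) (j : Fin r) : rho2 α (hc j) = 2 := by
  set aj := rootWeight (α j) (hb.isRoot j) with haj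
  set posW : Finset (Weight ℂ H L) :=
    Finset.univ.filter (fun χ => IsPosRoot H α (Weight.toLinear ℂ H L χ)) with hposW
  have hco : hc j = coroot aj := coroot_eq (hb.isRoot j) (hcr j)
  have e1 : rho2 α (hc j) = ∑ χ ∈ posW, χ (hc j) := by
    rw [rho2, LinearMap.sum_apply]
    have : posI α = posW.sigma (fun χ => (Finset.univ : Finset (Fin (finrank ℂ (rootSpace H ⇑χ))))) := by
      ext i; simp [posI, hposW]
    rw [this, Finset.sum_sigma]
    refine Finset.sum_congr rfl fun χ hχ => ?_
    have hnz : χ.IsNonZero := by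
      have := (Finset.mem_filter.mp hχ).2.1.1
      simpa using this
    simp only [Finset.sum_const, Finset.card_univ, Fintype.card_fin]
    rw [finrank_rootSpace_eq_one χ hnz]
    simp
  have hajm : aj ∈ posW := by
    simp only [hposW, Finset.mem_filter, Finset.mem_univ, true_and]
    refine ⟨hb.isRoot j, Pi.single j 1, ?_⟩
    rw [Finset.sum_eq_single j (fun i _ hi => by simp [hi]) (by simp)]
    simp
    rfl
  rw [e1, ← Finset.add_sum_erase _ _ hajm]
  have h2 : aj (hc j) = 2 := (hcr j).1
  have h3 : ∑ χ ∈ posW.erase aj, χ (hc j) = 0 := by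
    have hrr : ∀ χ : Weight ℂ H L, reflectRoot aj (reflectRoot aj χ) = χ := by
      intro χ
      ext x
      change (χ x - χ (coroot aj) * aj x) -
        (χ (coroot aj) - χ (coroot aj) * aj (coroot aj)) * aj x = χ x
      rw [← hco, h2]; ring
    refine Finset.sum_involution (fun χ _ => reflectRoot aj χ) ?_ ?_ ?_ ?_
    · intro χ _
      change χ (hc j) + (χ (hc j) - χ (coroot aj) * aj (hc j)) = 0
      rw [← hco, h2]; ring
    · intro χ _ hχ h
      have := congrArg (fun ψ : Weight ℂ H L => ψ (hc j)) h
      change χ (hc j) - χ (coroot aj) * aj (hc j) = χ (hc j) at this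
      rw [← hco, h2] at this
      apply hχ
      linear_combination (-1/2) * this
    · intro χ hχ
      obtain ⟨h4, h5⟩ := Finset.mem_erase.mp hχ
      have h5' := (Finset.mem_filter.mp h5).2
      refine Finset.mem_erase.mpr ⟨?_, ?_⟩
      · intro h6
        apply h4
        refine pos_mult hb j χ h5' (1 + χ (coroot aj)) ?_
        ext x
        have := congrArg (fun ψ : Weight ℂ H L => ψ x) h6
        change χ x - χ (coroot aj) * aj x = aj x at this
        change χ x = (1 + χ (coroot aj)) * aj x
        linear_combination this
      · exact Finset.mem_filter.mpr ⟨Finset.mem_univ _, refl_pos hb j χ h5' h4⟩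
    · intro χ _
      exact hrr χ
  rw [h2, h3, add_zero]

/-- Comparison of Casimir values of dominant weights. -/
lemma casVal_compare {r : ℕ} {α : Fin r → Module.Dual ℂ H} {hc : Fin r → H} (hb : IsBase H α)
    (hcr : ∀ j, IsCoroot H (α j) (hc j)) {μ l : Module.Dual ℂ H} (hμ : IsDomInt hc μ)
    (hl : IsDomInt hc l) (c : Fin r → ℕ) (h : l = μ - Qs α c) :
    ∃ t : ℝ, 0 ≤ t ∧ casVal α μ = casVal α l + t ∧ (t = 0 → c = 0) := by
  choose m hm using hμ
  choose n hn using hl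
  choose k hk hk' using fun j => fm_root_pos (hb.isRoot j) (hcr j)
  refine ⟨∑ j, (c j : ℝ) * (((m j : ℝ) + n j + 2) * (k j / 2)), ?_, ?_, ?_⟩
  · refine Finset.sum_nonneg fun j _ => ?_
    have := hk j
    positivity
  · have e1 : μ = l + Qs α c := by rw [h]; abel
    have e2 : casVal α μ = casVal α l + fm (Qs α c) (μ + l + rho2 α) := by
      simp only [casVal, fm_add_right]
      have : fm μ μ = fm l l + fm (Qs α c) μ + fm (Qs α c) l := by
        conv_lhs => rw [e1, fm_add_left, ← e1, fm_comm l μ, e1, fm_add_left, ← e1]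
        ring
      rw [this]
      have : fm μ (rho2 α) = fm l (rho2 α) + fm (Qs α c) (rho2 α) := by
        rw [← fm_add_left, ← e1]
      rw [this]; ring
    rw [e2]
    congr 1
    rw [Qs, fm_sum_left]
    push_cast
    refine Finset.sum_congr rfl fun j _ => ?_
    rw [fm_smul_left, fm_comm, fm_right_root (hb.isRoot j) (hcr j), hk']
    simp only [LinearMap.add_apply, rho2_coroot hb hcr, hm, hn]
  · intro h0
    rw [Finset.sum_eq_zero_iff_of_nonneg (fun j _ => by have := hk j; positivity)] at h0
    ext j
    have h1 := h0 j (Finset.mem_univ _)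
    have h2 : 0 < ((m j : ℝ) + n j + 2) * (k j / 2) := by have := hk j; positivity
    have h3 := (mul_eq_zero.mp h1).resolve_right h2.ne'
    exact_mod_cast h3

section Mods
variable {W : Type} [AddCommGroup W] [Module ℂ W] [LieRingModule L W] [LieModule ℂ L W]

lemma simple_pos {r : ℕ} {α : Fin r → Module.Dual ℂ H} (hb : IsBase H α) (j : Fin r) :
    IsPosRoot H α (α j) := by
  refine ⟨hb.isRoot j, Pi.single j 1, ?_⟩
  rw [Finset.sum_eq_single j (fun i _ hi => by simp [hi]) (by simp)]
  simp

lemma sl2_of_coroot {χ : Module.Dual ℂ H} {t : H} (h : IsCoroot H χ t) :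
    ∃ e f : L, e ∈ rootSpace H ⇑χ ∧ f ∈ rootSpace H ⇑(-χ) ∧ IsSl2Triple (t : L) e f := by
  obtain ⟨h2, e, he, f, hf, ht⟩ := h
  refine ⟨e, f, he, hf, ?_, ht.symm, ?_, ?_⟩
  · intro h0
    have : t = 0 := by exact_mod_cast h0
    rw [this] at h2
    simp at h2
  · have : ⁅(t : L), e⁆ = χ t • e := lie_eq_smul_of_mem_rootSpace he t
    rw [this, h2, ← Nat.cast_smul_eq_nsmul ℂ]; simp
  · have : ⁅(t : L), f⁆ = (-χ) t • f := lie_eq_smul_of_mem_rootSpace hf t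
    rw [this, LinearMap.neg_apply, h2, ← Nat.cast_smul_eq_nsmul ℂ]; simp

/-- Weights of singular vectors are dominant. -/
lemma sing_dom [FiniteDimensional ℂ W] {r : ℕ} {α : Fin r → Module.Dual ℂ H} {hc : Fin r → H}
    (hb : IsBase H α) (hcr : ∀ j, IsCoroot H (α j) (hc j)) {l : Module.Dual ℂ H} {w : W}
    (hw0 : w ≠ 0) (hw : w ∈ wt H W l) (hs : IsSing H α w) : IsDomInt hc l := by
  intro j
  obtain ⟨e, f, he, hf, ht⟩ := sl2_of_coroot (hcr j)
  have P : ht.HasPrimitiveVectorWith w (l (hc j)) :=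
    ⟨hw0, hw (hc j), hs _ (simple_pos hb j) e he⟩
  exact P.exists_nat

/-- Lemma A. -/
lemma cas_bound [FiniteDimensional ℂ W] {r : ℕ} {α : Fin r → Module.Dual ℂ H} {hc : Fin r → H}
    (hb : IsBase H α) (hcr : ∀ j, IsCoroot H (α j) (hc j)) {μ : Module.Dual ℂ H}
    (hμ : IsDomInt hc μ) (htop : ∀ w : W, w ∈ ⨆ c : Fin r → ℕ, wt H W (μ - Qs α c))
    (N0 : LieSubmodule ℂ L W) {z : ℂ} {w : W} (hwN : w ∈ N0) (hw0 : w ≠ 0)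
    (hw : cas H W w = z • w) :
    ∃ t : ℝ, 0 ≤ t ∧ casVal α μ = z + t ∧ (t = 0 → ∃ w' : W, w' ∈ N0 ∧ w' ≠ 0 ∧ w' ∈ wt H W μ ∧
      IsSing H α w' ∧ cas H W w' = z • w') := by
  let N1 : LieSubmodule ℂ L W :=
    { Module.End.eigenspace (cas H W) z with
      lie_mem := by
        intro y m hm
        have hm' : m ∈ Module.End.eigenspace (cas H W) z := hm
        change ⁅y, m⁆ ∈ Module.End.eigenspace (cas H W) z
        rw [Module.End.mem_eigenspace_iff] at hm' ⊢
        rw [cas_lie, hm', lie_smul] }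
  let N := N0 ⊓ N1
  have hN : ∀ m : W, m ∈ N ↔ m ∈ N0 ∧ cas H W m = z • m := fun m => by
    rw [LieSubmodule.mem_inf]
    exact and_congr_right fun _ => Module.End.mem_eigenspace_iff
  have : Nontrivial N := ⟨⟨⟨w, (hN w).mpr ⟨hwN, hw⟩⟩, 0, fun h => hw0 (congrArg Subtype.val h)⟩⟩
  obtain ⟨χ, ⟨m, hmN⟩, hm0, hmw, hms⟩ := exists_sing (W := N) hb
  have hm0' : m ≠ 0 := by rintro rfl; exact hm0 rfl
  have hmw' : m ∈ wt H W χ := fun h => congrArg Subtype.val (hmw h)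
  have hms' : IsSing H α m := fun ψ hψ e he => congrArg Subtype.val (hms ψ hψ e he)
  obtain ⟨hmN0, hmz⟩ := (hN m).mp hmN
  have hzc : z = casVal α χ := by
    have h1 := cas_sing hb hmw' hms'
    rw [hmz] at h1
    exact smul_left_injective ℂ hm0' h1
  obtain ⟨c, hc'⟩ : ∃ c, χ = μ - Qs α c := by
    by_contra hcon
    push Not at hcon
    exact hm0' (wt_eq_zero (fun c : Fin r → ℕ => μ - Qs α c) (fun c h => hcon c h.symm) hmw' (htop m))
  obtain ⟨t, ht0, ht1, ht2⟩ := casVal_compare hb hcr hμ (sing_dom hb hcr hm0' hmw' hms') c hc'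
  refine ⟨t, ht0, by rw [ht1, hzc], fun h => ⟨m, hmN0, hm0', ?_, hms', hmz⟩⟩
  rw [ht2 h, Qs_zero, sub_zero] at hc'
  rwa [← hc']

end Mods
end Part3


section Part4

open LieAlgebra.IsKilling

variable [FiniteDimensional ℂ L] [IsKilling ℂ L]
variable {H : LieSubalgebra ℂ L} [H.IsCartanSubalgebra]
variable {T : Type} [AddCommGroup T] [Module ℂ T] [LieRingModule L T] [LieModule ℂ L T]

lemma lsub_ne_bot (N : LieSubmodule ℂ L T) : N ≠ ⊥ ↔ ∃ x ∈ N, x ≠ 0 := by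
  rw [Ne, LieSubmodule.eq_bot_iff]
  push Not
  rfl

lemma top_weaken {r : ℕ} {α : Fin r → Module.Dual ℂ H} {μ : Module.Dual ℂ H} {t : T}
    (ht : t ∈ wt H T μ)
    (htop : ∀ w : T, w ∈ Submodule.span ℂ {t} ⊔
      ⨆ c : {c : Fin r → ℕ // c ≠ 0}, wt H T (μ - Qs α c.1)) (w : T) :
    w ∈ ⨆ c : Fin r → ℕ, wt H T (μ - Qs α c) := by
  have h : Submodule.span ℂ {t} ⊔ ⨆ c : {c : Fin r → ℕ // c ≠ 0}, wt H T (μ - Qs α c.1) ≤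
      ⨆ c : Fin r → ℕ, wt H T (μ - Qs α c) := by
    refine sup_le ?_ (iSup_le fun c => le_iSup (fun c => wt H T (μ - Qs α c)) c.1)
    rw [Submodule.span_singleton_le_iff_mem]
    refine Submodule.mem_iSup_of_mem 0 ?_
    rwa [Qs_zero, sub_zero]
  exact h (htop w)

lemma wt_map {T' : Type} [AddCommGroup T'] [Module ℂ T'] [LieRingModule L T'] [LieModule ℂ L T']
    (g : T →ₗ⁅ℂ,L⁆ T') {χ : Module.Dual ℂ H} {w : T} (hw : w ∈ wt H T χ) : g w ∈ wt H T' χ := by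
  intro h
  rw [← LieModuleHom.map_lie, hw h, map_smul]

lemma sing_map {T' : Type} [AddCommGroup T'] [Module ℂ T'] [LieRingModule L T'] [LieModule ℂ L T']
    (g : T →ₗ⁅ℂ,L⁆ T') {r : ℕ} {α : Fin r → Module.Dual ℂ H} {w : T} (hw : IsSing H α w) :
    IsSing H α (g w) := by
  intro χ hχ e he
  rw [← LieModuleHom.map_lie, hw χ hχ e he, map_zero]

lemma cartan_comp [FiniteDimensional ℂ T] {r : ℕ} {α : Fin r → Module.Dual ℂ H} {hc : Fin r → H}
    (hb : IsBase H α) (hcr : ∀ j, IsCoroot H (α j) (hc j)) {μ : Module.Dual ℂ H}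
    {t : T} (ht0 : t ≠ 0) (ht : t ∈ wt H T μ) (hts : IsSing H α t)
    (htop : ∀ w : T, w ∈ Submodule.span ℂ {t} ⊔
      ⨆ c : {c : Fin r → ℕ // c ≠ 0}, wt H T (μ - Qs α c.1)) :
    ∃ (G : LieSubmodule ℂ L T) (P : T →ₗ⁅ℂ,L⁆ G), (∀ g : G, P g = g) ∧ t ∈ G ∧
      IsSimpleOrder (LieSubmodule ℂ L G) ∧ ∀ w : T, cas H T w = casVal α μ • w → w ∈ G := by
  have hμ := sing_dom hb hcr ht0 ht hts
  set z := casVal α μ with hz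
  set A : Module.End ℂ T := cas H T - z • LinearMap.id with hA
  have hA' : ∀ w, A w = cas H T w - z • w := by intro w; simp [hA]
  have hAl : ∀ (y : L) w, A ⁅y, w⁆ = ⁅y, A w⁆ := by
    intro y w
    rw [hA', hA', cas_lie, lie_sub, lie_smul]
  have hAln : ∀ (n : ℕ) (y : L) w, (A ^ n) ⁅y, w⁆ = ⁅y, (A ^ n) w⁆ := by
    intro n y
    induction n with
    | zero => intro w; simp
    | succ n ih => intro w; rw [pow_succ, Module.End.mul_apply, Module.End.mul_apply, hAl, ih]
  obtain ⟨n, hn1, hn⟩ : ∃ n, 1 ≤ n ∧ IsCompl (LinearMap.ker (A ^ n)) (LinearMap.range (A ^ n)) := by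
    have h1 := A.eventually_isCompl_ker_pow_range_pow
    obtain ⟨N, hN⟩ := Filter.eventually_atTop.mp h1
    exact ⟨N + 1, by omega, hN _ (by omega)⟩
  let G : LieSubmodule ℂ L T :=
    { LinearMap.ker (A ^ n) with
      lie_mem := by
        intro y m hm
        have hm' : (A ^ n) m = 0 := hm
        change (A ^ n) ⁅y, m⁆ = 0
        rw [hAln, hm', lie_zero] }
  have hG : ∀ m, m ∈ G ↔ (A ^ n) m = 0 := fun m => Iff.rfl
  have hGA : ∀ m, A m = 0 → m ∈ G := by
    intro m hm
    rw [hG]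
    obtain ⟨k, rfl⟩ : ∃ k, n = k + 1 := ⟨n - 1, by omega⟩
    rw [pow_succ, Module.End.mul_apply, hm, map_zero]
  have hGc : ∀ w : T, cas H T w = z • w → w ∈ G := by
    intro w hw
    apply hGA
    rw [hA', hw, sub_self]
  have htG : t ∈ G := hGc t (cas_sing hb ht hts)
  -- every nonzero submodule of G contains t
  have key1 : ∀ N : LieSubmodule ℂ L T, N ≤ G → N ≠ ⊥ → t ∈ N := by
    intro N hNG hN0
    obtain ⟨w, hw, hw0⟩ := (lsub_ne_bot N).mp hN0
    -- find the last nonzero A-iterate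
    have hex : ∃ k, (A ^ k) w = 0 := ⟨n, hNG hw⟩
    have hmin := Nat.find_spec hex
    have hk0 : Nat.find hex ≠ 0 := by
      intro h0
      rw [h0] at hmin
      exact hw0 (by simpa using hmin)
    obtain ⟨k, hk⟩ := Nat.exists_eq_succ_of_ne_zero hk0
    have hne : (A ^ k) w ≠ 0 := Nat.find_min hex (by omega)
    rw [hk, Nat.succ_eq_add_one, pow_succ', Module.End.mul_apply] at hmin
    have hAN : ∀ k, ∀ m ∈ N, (A ^ k) m ∈ N := by
      have hA1 : ∀ m ∈ N, A m ∈ N := by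
        intro m hm
        rw [hA', cas_apply]
        refine N.sub_mem ?_ (N.smul_mem _ hm)
        exact Submodule.sum_mem N.toSubmodule fun i _ => N.lie_mem (N.lie_mem hm)
      intro k
      induction k with
      | zero => intro m hm; simpa using hm
      | succ k ih => intro m hm; rw [pow_succ, Module.End.mul_apply]; exact ih _ (hA1 m hm)
    have hcas : cas H T ((A ^ k) w) = z • (A ^ k) w := by
      rw [hA'] at hmin
      exact sub_eq_zero.mp hmin
    obtain ⟨s, hs0, hs1, hs2⟩ := cas_bound hb hcr hμ (top_weaken ht htop) N (hAN k w hw) hne hcas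
    have hs : s = 0 := by
      have : (s : ℂ) = 0 := by linear_combination -hs1
      exact_mod_cast this
    obtain ⟨w', hw'N, hw'0, hw'w, -, -⟩ := hs2 hs
    obtain ⟨a, rfl⟩ := wt_top_mult hb ht (htop w') hw'w
    have ha : a ≠ 0 := by rintro rfl; simp at hw'0
    have := N.smul_mem a⁻¹ hw'N
    rwa [smul_smul, inv_mul_cancel₀ ha, one_smul] at this
  -- every submodule containing t contains G
  have key2 : ∀ N : LieSubmodule ℂ L T, t ∈ N → G ≤ N := by
    intro N htN g hg
    by_contra hgN
    have hex : ∃ k, (A ^ k) g ∈ N := ⟨n, by rw [(hG g).mp hg]; exact N.zero_mem⟩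
    have hmin := Nat.find_spec hex
    have hk0 : Nat.find hex ≠ 0 := by
      intro h0
      rw [h0] at hmin
      exact hgN (by simpa using hmin)
    obtain ⟨k, hk⟩ := Nat.exists_eq_succ_of_ne_zero hk0
    have hne : (A ^ k) g ∉ N := Nat.find_min hex (by omega)
    rw [hk, Nat.succ_eq_add_one, pow_succ', Module.End.mul_apply] at hmin
    let q : T →ₗ⁅ℂ,L⁆ (T ⧸ N) := LieSubmodule.Quotient.mk' N
    have hq0 : ∀ m, q m = 0 ↔ m ∈ N := fun m => LieSubmodule.Quotient.mk_eq_zero'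
    have hqs : Function.Surjective q := LieSubmodule.Quotient.surjective_mk' N
    have hne' : q ((A ^ k) g) ≠ 0 := fun h => hne ((hq0 _).mp h)
    have hcas : cas H (T ⧸ N) (q ((A ^ k) g)) = z • q ((A ^ k) g) := by
      have h1 := (hq0 _).mpr hmin
      rw [hA', map_sub, map_smul] at h1
      rw [cas_map]
      exact sub_eq_zero.mp h1
    have hqt : ∀ w : T ⧸ N, w ∈ ⨆ c : {c : Fin r → ℕ // c ≠ 0}, wt H (T ⧸ N) (μ - Qs α c.1) := by
      intro w
      obtain ⟨w, rfl⟩ := hqs w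
      have hle : Submodule.span ℂ {t} ⊔
          ⨆ c : {c : Fin r → ℕ // c ≠ 0}, wt H T (μ - Qs α c.1) ≤
          (⨆ c : {c : Fin r → ℕ // c ≠ 0}, wt H (T ⧸ N) (μ - Qs α c.1)).comap q.toLinearMap := by
        refine sup_le ?_ (iSup_le fun c => ?_)
        · rw [Submodule.span_singleton_le_iff_mem, Submodule.mem_comap]
          have : q.toLinearMap t = 0 := (hq0 t).mpr htN
          rw [this]
          exact Submodule.zero_mem _
        · intro m hm
          rw [Submodule.mem_comap]
          exact Submodule.mem_iSup_of_mem c (wt_map q hm)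
      exact hle (htop w)
    have hqt' : ∀ w : T ⧸ N, w ∈ ⨆ c : Fin r → ℕ, wt H (T ⧸ N) (μ - Qs α c) := by
      intro w
      have h : (⨆ c : {c : Fin r → ℕ // c ≠ 0}, wt H (T ⧸ N) (μ - Qs α c.1)) ≤
        ⨆ c : Fin r → ℕ, wt H (T ⧸ N) (μ - Qs α c) :=
        iSup_le fun c => le_iSup (fun c => wt H (T ⧸ N) (μ - Qs α c)) c.1
      exact h (hqt w)
    obtain ⟨s, hs0, hs1, hs2⟩ := cas_bound hb hcr hμ hqt' ⊤ (LieSubmodule.mem_top _) hne' hcas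
    have hs : s = 0 := by
      have : (s : ℂ) = 0 := by linear_combination -hs1
      exact_mod_cast this
    obtain ⟨w', -, hw'0, hw'w, -, -⟩ := hs2 hs
    apply hw'0
    refine wt_eq_zero (fun c : {c : Fin r → ℕ // c ≠ 0} => μ - Qs α c.1) ?_ hw'w (hqt w')
    rintro ⟨c, hc⟩ h
    apply hc
    apply Qs_inj hb
    rw [Qs_zero]
    simpa using h
  let P0 := Submodule.projectionOnto _ _ hn
  have hP0l : ∀ g : T, ∀ hg : g ∈ G, P0 g = ⟨g, hg⟩ := fun g hg =>
    Submodule.projectionOnto_apply_of_mem_left hn hg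
  have hP0r : ∀ g : T, P0 ((A ^ n) g) = 0 := fun g =>
    (Submodule.projectionOnto_apply_eq_zero_iff hn).mpr ⟨g, rfl⟩
  let P : T →ₗ⁅ℂ,L⁆ G :=
    { (P0 : T →ₗ[ℂ] G) with
      map_lie' := by
        intro y w
        change P0 ⁅y, w⁆ = (⁅y, (P0 w : G)⁆ : G)
        obtain ⟨g, hg, q, hq, rfl⟩ := Submodule.mem_sup.mp
          (show w ∈ LinearMap.ker (A ^ n) ⊔ LinearMap.range (A ^ n) by
            rw [hn.sup_eq_top]; exact Submodule.mem_top)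
        obtain ⟨q, rfl⟩ := hq
        rw [lie_add, map_add, map_add, hP0r, add_zero, ← hAln, hP0r, add_zero, hP0l g hg,
          hP0l _ (G.lie_mem hg)]
        rfl }
  refine ⟨G, P, fun g => ?_, htG, ?_, hGc⟩
  · exact hP0l g g.2
  · have hnt : Nontrivial (LieSubmodule ℂ L G) := by
      refine ⟨⟨⊥, ⊤, fun h => ?_⟩⟩
      have h1 : (⟨t, htG⟩ : G) ∈ (⊥ : LieSubmodule ℂ L G) := by rw [h]; exact LieSubmodule.mem_top _
      rw [LieSubmodule.mem_bot] at h1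
      exact ht0 (congrArg Subtype.val h1)
    refine { eq_bot_or_eq_top := fun N => ?_ }
    by_cases hN : N = ⊥
    · left; exact hN
    · right
      obtain ⟨w, hw, hw0⟩ := (lsub_ne_bot N).mp hN
      have h1 : t ∈ N.map G.incl := by
        apply key1
        · intro m hm
          obtain ⟨m', _, rfl⟩ := (LieSubmodule.mem_map m).mp hm
          exact m'.2
        · rw [lsub_ne_bot]
          refine ⟨w.1, (LieSubmodule.mem_map _).mpr ⟨w, hw, rfl⟩, fun h => hw0 (Subtype.ext h)⟩
      have h2 := key2 _ h1
      rw [eq_top_iff]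
      intro m _
      obtain ⟨m', hm', hmm⟩ := (LieSubmodule.mem_map _).mp (h2 m.2)
      have : m' = m := Subtype.ext hmm
      rwa [← this]

end Part4


section Part5

open LieAlgebra.IsKilling

variable [FiniteDimensional ℂ L] [IsKilling ℂ L]
variable {H : LieSubalgebra ℂ L} [H.IsCartanSubalgebra]
variable {V : Type} [AddCommGroup V] [Module ℂ V] [LieRingModule L V] [LieModule ℂ L V]
variable {V' : Type} [AddCommGroup V'] [Module ℂ V'] [LieRingModule L V'] [LieModule ℂ L V']

/-- highest weight irreducible module with a chosen highest weight vector -/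
structure HW (H : LieSubalgebra ℂ L) [H.IsCartanSubalgebra] {r : ℕ} (α : Fin r → Module.Dual ℂ H)
    (μ : Module.Dual ℂ H) (v : V) : Prop where
  simple : IsSimpleOrder (LieSubmodule ℂ L V)
  ne : v ≠ 0
  wt : v ∈ wt H V μ
  sing : IsSing H α v

lemma IsHWIrrep.exists_hw {r : ℕ} {α : Fin r → Module.Dual ℂ H} {μ : Module.Dual ℂ H}
    (h : IsHWIrrep H α μ V) : ∃ v : V, HW H α μ v := by
  obtain ⟨hs, v, h0, h1, h2⟩ := h
  exact ⟨v, hs, h0, h1, h2⟩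

lemma HW.eq_top {r : ℕ} {α : Fin r → Module.Dual ℂ H} {μ : Module.Dual ℂ H} {v : V}
    (h : HW H α μ v) (N : LieSubmodule ℂ L V) {x : V} (hx : x ∈ N) (hx0 : x ≠ 0) (y : V) :
    y ∈ N := by
  have := h.simple
  rcases eq_bot_or_eq_top N with h1 | h1
  · rw [h1, LieSubmodule.mem_bot] at hx
    exact absurd hx hx0
  · rw [h1]; exact LieSubmodule.mem_top _

lemma HW.eq_bot {r : ℕ} {α : Fin r → Module.Dual ℂ H} {μ : Module.Dual ℂ H} {v : V}
    (h : HW H α μ v) (N : LieSubmodule ℂ L V) {x : V} (hx : x ∉ N) (y : V) (hy : y ∈ N) :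
    y = 0 := by
  by_contra hy0
  exact hx (h.eq_top N hy hy0 x)

lemma HW.span {r : ℕ} {α : Fin r → Module.Dual ℂ H} {μ : Module.Dual ℂ H} {v : V}
    (h : HW H α μ v) (hb : IsBase H α) (y : V) : y ∈ Submodule.span ℂ {w | Words H α v w} :=
  words_span hb h.wt h.sing y
    (h.eq_top _ (LieSubmodule.subset_lieSpan (Set.mem_singleton v)) h.ne y)

lemma HW.top {r : ℕ} {α : Fin r → Module.Dual ℂ H} {μ : Module.Dual ℂ H} {v : V}
    (h : HW H α μ v) (hb : IsBase H α) (y : V) :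
    y ∈ Submodule.span ℂ {v} ⊔ ⨆ c : {c : Fin r → ℕ // c ≠ 0}, AdjPaper.wt H V (μ - Qs α c.1) :=
  lieSpan_sing_le hb h.wt h.sing y
    (h.eq_top _ (LieSubmodule.subset_lieSpan (Set.mem_singleton v)) h.ne y)

/-- a different extremal vector -/
lemma HW.low [FiniteDimensional ℂ V] {r : ℕ} {α : Fin r → Module.Dual ℂ H} {μ : Module.Dual ℂ H}
    {v : V} (h : HW H α μ v) (hb : IsBase H α) : ∃ (l : Module.Dual ℂ H) (u : V), HW H (-α) l u := by
  have : Nontrivial V := ⟨⟨v, 0, h.ne⟩⟩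
  obtain ⟨l, u, hu0, hu, hus⟩ := exists_sing (W := V) hb.neg
  exact ⟨l, u, h.simple, hu0, hu, hus⟩

/-- The direct sum of two modules. -/
instance prodLRM : LieRingModule L (V × V') where
  bracket x w := (⁅x, w.1⁆, ⁅x, w.2⁆)
  add_lie x y w := by ext <;> simp
  lie_add x w w' := by ext <;> simp
  leibniz_lie x y w := by ext <;> simp

lemma prod_lie (x : L) (w : V × V') : ⁅x, w⁆ = (⁅x, w.1⁆, ⁅x, w.2⁆) := rfl

instance prodLM : LieModule ℂ L (V × V') where
  smul_lie t x w := by ext <;> simp [prod_lie]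
  lie_smul t x w := by ext <;> simp [prod_lie]

lemma hom_exists {r : ℕ} {α : Fin r → Module.Dual ℂ H} {μ : Module.Dual ℂ H} {v : V} {v' : V'}
    (hb : IsBase H α) (h : HW H α μ v) (h' : HW H α μ v') :
    ∃ f : V →ₗ⁅ℂ,L⁆ V', f v = v' := by
  let p : V × V' := (v, v')
  have hpw : p ∈ wt H (V × V') μ := by
    intro x
    rw [prod_lie]
    ext
    · exact h.wt x
    · exact h'.wt x
  have hps : IsSing H α p := by
    intro χ hχ e he
    rw [prod_lie]
    ext
    · exact h.sing χ hχ e he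
    · exact h'.sing χ hχ e he
  let S := LieSubmodule.lieSpan ℂ L {p}
  have hpS : p ∈ S := LieSubmodule.subset_lieSpan (Set.mem_singleton p)
  let K : LieSubmodule ℂ L V' :=
    { carrier := {y | ((0 : V), y) ∈ S}
      add_mem' := by
        intro a b ha hb
        have := S.add_mem ha hb
        simpa using this
      zero_mem' := S.zero_mem
      smul_mem' := by
        intro c a ha
        have := S.smul_mem c ha
        simpa using this
      lie_mem := by
        intro x a ha
        have := S.lie_mem (x := x) ha
        rw [prod_lie] at this
        simpa using this }
  have hK : ∀ y, y ∈ K ↔ ((0 : V), y) ∈ S := fun y => Iff.rfl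
  have hv'K : v' ∉ K := by
    intro hv
    rw [hK] at hv
    have hw : ((0 : V), v') ∈ wt H (V × V') μ := by
      intro x
      rw [prod_lie]
      ext
      · simp
      · exact h'.wt x
    obtain ⟨a, ha⟩ := wt_top_mult hb hpw (lieSpan_sing_le hb hpw hps _ hv) hw
    have h1 := congrArg Prod.fst ha
    have h2 := congrArg Prod.snd ha
    simp only [p, Prod.smul_fst, Prod.smul_snd] at h1 h2
    have ha0 : a = 0 := by
      rcases smul_eq_zero.mp h1.symm with h3 | h3
      · exact h3
      · exact absurd h3 h.ne
    rw [ha0, zero_smul] at h2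
    exact h'.ne h2
  have hinj : ∀ x y y', (x, y) ∈ S → (x, y') ∈ S → y = y' := by
    intro x y y' h1 h2
    have := S.sub_mem h1 h2
    simp only [Prod.mk_sub_mk, sub_self] at this
    exact sub_eq_zero.mp (h'.eq_bot K hv'K _ this)
  let R : LieSubmodule ℂ L V :=
    { carrier := {x | ∃ y, (x, y) ∈ S}
      add_mem' := by
        rintro a b ⟨y, ha⟩ ⟨y', hb⟩
        exact ⟨y + y', S.add_mem ha hb⟩
      zero_mem' := ⟨0, S.zero_mem⟩
      smul_mem' := by
        rintro c a ⟨y, ha⟩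
        exact ⟨c • y, S.smul_mem c ha⟩
      lie_mem := by
        rintro x a ⟨y, ha⟩
        exact ⟨⁅x, y⁆, S.lie_mem (x := x) ha⟩ }
  have hR : ∀ x, ∃ y, (x, y) ∈ S := fun x => h.eq_top R (x := v) ⟨v', hpS⟩ h.ne x
  choose f hf using hR
  refine ⟨{ toFun := f, map_add' := ?_, map_smul' := ?_, map_lie' := ?_ }, ?_⟩
  · intro a b
    exact hinj _ _ _ (hf _) (S.add_mem (hf a) (hf b))
  · intro c a
    exact hinj _ _ _ (hf _) (S.smul_mem c (hf a))
  · intro x a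
    exact hinj _ _ _ (hf _) (S.lie_mem (x := x) (hf a))
  · exact hinj _ _ _ (hf _) hpS

lemma HW.hom_id {r : ℕ} {α : Fin r → Module.Dual ℂ H} {μ : Module.Dual ℂ H} {v : V}
    (h : HW H α μ v) (f : V →ₗ⁅ℂ,L⁆ V) (hf : f v = v) (x : V) : f x = x := by
  let N : LieSubmodule ℂ L V :=
    { LinearMap.eqLocus f.toLinearMap LinearMap.id with
      lie_mem := by
        intro y m hm
        have hm' : f m = m := hm
        change f ⁅y, m⁆ = ⁅y, m⁆
        rw [LieModuleHom.map_lie, hm'] }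
  exact h.eq_top N (x := v) hf h.ne x

end Part5

section Tens

open LieAlgebra.IsKilling

variable [FiniteDimensional ℂ L] [IsKilling ℂ L]
variable {H : LieSubalgebra ℂ L} [H.IsCartanSubalgebra]
variable {X : Type} [AddCommGroup X] [Module ℂ X] [LieRingModule L X] [LieModule ℂ L X]
variable {F : Type} [AddCommGroup F] [Module ℂ F] [LieRingModule L F] [LieModule ℂ L F]
variable {V : Type} [AddCommGroup V] [Module ℂ V] [LieRingModule L V] [LieModule ℂ L V]

lemma tmul_wt {l n : Module.Dual ℂ H} {x : X} {f : F} (hx : x ∈ wt H X l) (hf : f ∈ wt H F n) :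
    x ⊗ₜ[ℂ] f ∈ wt H (X ⊗[ℂ] F) (l + n) := by
  intro h
  rw [TensorProduct.LieModule.lie_tmul_right, hx h, hf h, ← TensorProduct.smul_tmul',
    TensorProduct.tmul_smul, ← add_smul]
  rfl

lemma tmul_sing {r : ℕ} {α : Fin r → Module.Dual ℂ H} {x : X} {f : F} (hx : IsSing H α x)
    (hf : IsSing H α f) : IsSing H α (x ⊗ₜ[ℂ] f) := by
  intro χ hχ e he
  rw [TensorProduct.LieModule.lie_tmul_right, hx χ hχ e he, hf χ hχ e he]
  simp

lemma tmul_ne {x : X} {f : F} (hx : x ≠ 0) (hf : f ≠ 0) : x ⊗ₜ[ℂ] f ≠ 0 := by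
  intro h
  obtain ⟨g, hg⟩ := Module.Projective.exists_dual_ne_zero ℂ hx
  obtain ⟨k, hk⟩ := Module.Projective.exists_dual_ne_zero ℂ hf
  have h1 := congrArg (fun t => TensorProduct.lid ℂ ℂ (TensorProduct.map g k t)) h
  simp at h1
  tauto

lemma tmul_top {r : ℕ} {α : Fin r → Module.Dual ℂ H} (hb : IsBase H α) {l n : Module.Dual ℂ H}
    {x : X} {f : F} (hx : HW H α l x) (hf : HW H α n f) (w : X ⊗[ℂ] F) :
    w ∈ Submodule.span ℂ {x ⊗ₜ[ℂ] f} ⊔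
      ⨆ c : {c : Fin r → ℕ // c ≠ 0}, wt H (X ⊗[ℂ] F) (l + n - Qs α c.1) := by
  set P := Submodule.span ℂ {x ⊗ₜ[ℂ] f} ⊔
      ⨆ c : {c : Fin r → ℕ // c ≠ 0}, wt H (X ⊗[ℂ] F) (l + n - Qs α c.1) with hP
  have hw : ∀ c : Fin r → ℕ, c ≠ 0 → ∀ m, m ∈ wt H (X ⊗[ℂ] F) (l + n - Qs α c) → m ∈ P := by
    intro c hc m hm
    exact Submodule.mem_sup_right
      (Submodule.mem_iSup_of_mem (⟨c, hc⟩ : {c : Fin r → ℕ // c ≠ 0}) hm)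
  have h1 : ∀ a, Words H α x a → ∀ b, Words H α f b → a ⊗ₜ[ℂ] b ∈ P := by
    intro a ha b hb'
    rcases words_cases hb hx.wt a ha with rfl | ⟨c, hc, hac⟩
    · rcases words_cases hb hf.wt b hb' with rfl | ⟨d, hd, hbd⟩
      · exact Submodule.mem_sup_left (Submodule.mem_span_singleton_self _)
      · refine hw d hd _ ?_
        have := tmul_wt hx.wt hbd
        rwa [add_sub_assoc]
    · rcases words_cases hb hf.wt b hb' with rfl | ⟨d, hd, hbd⟩
      · refine hw c hc _ ?_
        have := tmul_wt hac hf.wt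
        rwa [add_sub_right_comm]
      · refine hw (c + d) ?_ _ ?_
        · intro h
          apply hd
          ext j
          have := congrFun h j
          simp at this ⊢; omega
        · have := tmul_wt hac hbd
          rwa [Qs_add, add_sub_add_comm]
  induction w using TensorProduct.induction_on with
  | zero => exact P.zero_mem
  | add a b ha hb => exact P.add_mem ha hb
  | tmul a b =>
    have ha := hx.span hb a
    have hb' := hf.span hb b
    induction ha using Submodule.span_induction with
    | zero => simp
    | add a a' _ _ h h' => rw [TensorProduct.add_tmul]; exact P.add_mem h h'
    | smul c a _ h => rw [← TensorProduct.smul_tmul']; exact P.smul_mem c h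
    | mem a ha =>
      induction hb' using Submodule.span_induction with
      | zero => simp
      | add a a' _ _ h h' => rw [TensorProduct.tmul_add]; exact P.add_mem h h'
      | smul c a _ h => rw [TensorProduct.tmul_smul]; exact P.smul_mem c h
      | mem b hb' => exact h1 a ha b hb'

/-- existence of the Cartan product -/
lemma cartan_prod [FiniteDimensional ℂ X] [FiniteDimensional ℂ F] {r : ℕ}
    {α : Fin r → Module.Dual ℂ H} {hc : Fin r → H}
    (hb : IsBase H α) (hcr : ∀ j, IsCoroot H (α j) (hc j)) {l n : Module.Dual ℂ H}
    {x : X} {f : F} (hx : HW H α l x) (hf : HW H α n f) :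
    ∃ (G : LieSubmodule ℂ L (X ⊗[ℂ] F)) (P : (X ⊗[ℂ] F) →ₗ⁅ℂ,L⁆ G) (ht : x ⊗ₜ[ℂ] f ∈ G),
      (∀ g : G, P g = g) ∧ HW H α (l + n) (⟨x ⊗ₜ[ℂ] f, ht⟩ : G) ∧
        ∀ w : X ⊗[ℂ] F, cas H _ w = casVal α (l + n) • w → w ∈ G := by
  obtain ⟨G, P, hP, ht, hs, hG⟩ := cartan_comp hb hcr (tmul_ne hx.ne hf.ne) (tmul_wt hx.wt hf.wt)
    (tmul_sing hx.sing hf.sing) (tmul_top hb hx hf)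
  refine ⟨G, P, ht, hP, ⟨hs, ?_, ?_, ?_⟩, hG⟩
  · intro h
    exact tmul_ne hx.ne hf.ne (congrArg Subtype.val h)
  · intro h
    exact Subtype.ext (tmul_wt hx.wt hf.wt h)
  · intro χ hχ e he
    exact Subtype.ext (tmul_sing hx.sing hf.sing χ hχ e he)

/-- Embedding and projection for the Cartan product. -/
lemma cartan_embed [FiniteDimensional ℂ X] [FiniteDimensional ℂ F] {r : ℕ}
    {α : Fin r → Module.Dual ℂ H} {hc : Fin r → H}
    (hb : IsBase H α) (hcr : ∀ j, IsCoroot H (α j) (hc j)) {l n : Module.Dual ℂ H}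
    {x : X} {f : F} (hx : HW H α l x) (hf : HW H α n f) {v : V} (hv : HW H α (l + n) v)
    {l' n' : Module.Dual ℂ H} {x' : X} {f' : F} (hx' : HW H (-α) l' x') (hf' : HW H (-α) n' f') :
    ∃ (i : V →ₗ⁅ℂ,L⁆ (X ⊗[ℂ] F)) (p : (X ⊗[ℂ] F) →ₗ⁅ℂ,L⁆ V), (∀ y, p (i y) = y) ∧
      i v = x ⊗ₜ[ℂ] f ∧ i (p (x' ⊗ₜ[ℂ] f')) = x' ⊗ₜ[ℂ] f' := by
  obtain ⟨G, P, ht, hP, hG, hGc⟩ := cartan_prod hb hcr hx hf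
  obtain ⟨i0, hi0⟩ := hom_exists hb hv hG
  obtain ⟨p0, hp0⟩ := hom_exists hb hG hv
  have h1 : ∀ y, p0 (i0 y) = y := hv.hom_id (p0.comp i0) (by simp [hi0, hp0])
  have h2 : ∀ y, i0 (p0 y) = y := hG.hom_id (i0.comp p0) (by simp [hi0, hp0])
  refine ⟨G.incl.comp i0, p0.comp P, ?_, ?_, ?_⟩
  · intro y
    simp only [LieModuleHom.comp_apply, LieSubmodule.incl_apply, hP, h1]
  · simp [hi0]
  · have hmem : x' ⊗ₜ[ℂ] f' ∈ G := by
      apply hGc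
      have hcr' : ∀ j, IsCoroot H ((-α) j) ((-hc) j) := fun j => (hcr j).neg
      have e1 := cas_sing hb.neg (tmul_wt hx'.wt hf'.wt) (tmul_sing hx'.sing hf'.sing)
      have e2 := cas_sing hb (tmul_wt hx.wt hf.wt) (tmul_sing hx.sing hf.sing)
      have d1 := sing_dom hb.neg hcr' (tmul_ne hx'.ne hf'.ne) (tmul_wt hx'.wt hf'.wt)
        (tmul_sing hx'.sing hf'.sing)
      have d2 := sing_dom hb hcr (tmul_ne hx.ne hf.ne) (tmul_wt hx.wt hf.wt)
        (tmul_sing hx.sing hf.sing)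
      obtain ⟨s, hs, hs1, -⟩ := cas_bound hb hcr d2
        (top_weaken (tmul_wt hx.wt hf.wt) (tmul_top hb hx hf)) ⊤ (LieSubmodule.mem_top _)
        (tmul_ne hx'.ne hf'.ne) e1
      obtain ⟨s', hs', hs1', -⟩ := cas_bound hb.neg hcr' d1
        (top_weaken (tmul_wt hx'.wt hf'.wt) (tmul_top hb.neg hx' hf')) ⊤ (LieSubmodule.mem_top _)
        (tmul_ne hx.ne hf.ne) e2
      have h0 : ((s + s' : ℝ) : ℂ) = 0 := by
        push_cast
        linear_combination -hs1 - hs1'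
      have h0' : s + s' = 0 := by exact_mod_cast h0
      have : s = 0 := by linarith
      rw [e1, hs1, this]
      simp
    have h3 : P (x' ⊗ₜ[ℂ] f') = ⟨x' ⊗ₜ[ℂ] f', hmem⟩ := hP ⟨x' ⊗ₜ[ℂ] f', hmem⟩
    simp only [LieModuleHom.comp_apply, h3, h2, LieSubmodule.incl_apply]

end Tens


section Part6

open LieAlgebra.IsKilling

variable [FiniteDimensional ℂ L] [IsKilling ℂ L]
variable {H : LieSubalgebra ℂ L} [H.IsCartanSubalgebra]

lemma dual_zero {r : ℕ} {α : Fin r → Module.Dual ℂ H} {hc : Fin r → H} (hb : IsBase H α)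
    (hcr : ∀ j, IsCoroot H (α j) (hc j)) {d : Module.Dual ℂ H} (h : ∀ j, d (hc j) = 0) : d = 0 := by
  have h1 : ∀ j, α j ((cartanEquivDual H).symm d) = 0 := by
    intro j
    change fm (α j) d = 0
    rw [fm_comm, fm_right_root (hb.isRoot j) (hcr j), h, zero_mul]
  have h2 : ∀ χ : Weight ℂ H L, χ ((cartanEquivDual H).symm d) = 0 := by
    intro χ
    by_cases hχ : χ.IsZero
    · exact congrFun hχ _
    · have h3 := isRoot_toLinear χ hχ
      have h4 : Weight.toLinear ℂ H L χ ((cartanEquivDual H).symm d) = 0 := by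
        rcases hb.pos_neg _ h3 with ⟨c, hc⟩ | ⟨c, hc⟩ <;> rw [hc] <;>
          simp [LinearMap.sum_apply, h1]
      exact h4
  have h5 : (cartanEquivDual H).symm d ∈ (⨅ χ : Weight ℂ H L, LinearMap.ker (Weight.toLinear ℂ H L χ)) := by
    rw [Submodule.mem_iInf]
    exact fun χ => h2 χ
  rw [iInf_ker_weight_eq_bot, Submodule.mem_bot] at h5
  simpa using h5

lemma dual_ext {r : ℕ} {α : Fin r → Module.Dual ℂ H} {hc : Fin r → H} (hb : IsBase H α)
    (hcr : ∀ j, IsCoroot H (α j) (hc j)) {d d' : Module.Dual ℂ H} (h : ∀ j, d (hc j) = d' (hc j)) :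
    d = d' := by
  rw [← sub_eq_zero]
  exact dual_zero hb hcr (fun j => by simp [h])

/-- existence of a highest weight module -/
def Ex (H : LieSubalgebra ℂ L) [H.IsCartanSubalgebra] {r : ℕ} (α : Fin r → Module.Dual ℂ H)
    (l : Module.Dual ℂ H) : Prop :=
  ∃ (X : Type) (_ : AddCommGroup X) (_ : Module ℂ X) (_ : LieRingModule L X)
    (_ : LieModule ℂ L X) (_ : FiniteDimensional ℂ X) (x : X), HW H α l x

/-- trivial module -/
def Triv : Type := ℂ

/-- generator of the trivial module -/
noncomputable def Triv.gen : Triv := (1 : ℂ)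

noncomputable instance : AddCommGroup Triv := inferInstanceAs (AddCommGroup ℂ)
noncomputable instance : Module ℂ Triv := inferInstanceAs (Module ℂ ℂ)
instance : FiniteDimensional ℂ Triv := inferInstanceAs (FiniteDimensional ℂ ℂ)

noncomputable instance : LieRingModule L Triv where
  bracket _ _ := 0
  add_lie := by intros; simp
  lie_add := by intros; simp
  leibniz_lie := by intros; simp

lemma triv_lie (x : L) (t : Triv) : ⁅x, t⁆ = 0 := rfl

instance : LieModule ℂ L Triv where
  smul_lie := by intros; simp [triv_lie]
  lie_smul := by intros; simp [triv_lie]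

lemma Ex_zero {r : ℕ} (α : Fin r → Module.Dual ℂ H) : Ex H α 0 := by
  refine ⟨Triv, inferInstance, inferInstance, inferInstance, inferInstance, inferInstance,
    Triv.gen, ?_, ?_, ?_, ?_⟩
  · refine { exists_pair_ne := ⟨⊥, ⊤, ?_⟩, eq_bot_or_eq_top := ?_ }
    · intro h
      have h1 : (show Triv from (1 : ℂ)) ∈ (⊤ : LieSubmodule ℂ L Triv) := LieSubmodule.mem_top _
      rw [← h, LieSubmodule.mem_bot] at h1
      exact one_ne_zero (α := ℂ) h1
    · intro N
      by_cases hN : N = ⊥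
      · left; exact hN
      · right
        obtain ⟨x, hx, hx0⟩ := (lsub_ne_bot N).mp hN
        rw [eq_top_iff]
        intro y _
        have h2 := N.smul_mem (show ℂ from (show ℂ from y) / (show ℂ from x)) hx
        have h3 : ((show ℂ from y) / (show ℂ from x)) * (show ℂ from x) = (show ℂ from y) :=
          div_mul_cancel₀ _ hx0
        have h4 : ((show ℂ from y) / (show ℂ from x)) • x = y := h3
        rwa [h4] at h2
  · exact one_ne_zero (α := ℂ)
  · intro h
    rw [triv_lie, LinearMap.zero_apply, zero_smul]
  · intro χ _ e _
    rfl

lemma Ex_add {r : ℕ} {α : Fin r → Module.Dual ℂ H} {hc : Fin r → H} (hb : IsBase H α)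
    (hcr : ∀ j, IsCoroot H (α j) (hc j)) {l n : Module.Dual ℂ H} (h : Ex H α l) (h' : Ex H α n) :
    Ex H α (l + n) := by
  obtain ⟨X, _, _, _, _, _, x, hx⟩ := h
  obtain ⟨F, _, _, _, _, _, f, hf⟩ := h'
  obtain ⟨G, P, ht, hP, hG, hGc⟩ := cartan_prod hb hcr hx hf
  exact ⟨G, inferInstance, inferInstance, inferInstance, inferInstance, inferInstance, _, hG⟩

lemma Ex_dom {r : ℕ} {α : Fin r → Module.Dual ℂ H} {hc : Fin r → H} (hb : IsBase H α)
    (hcr : ∀ j, IsCoroot H (α j) (hc j)) (ϖ : Fin r → Module.Dual ℂ H)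
    (hϖ : ∀ j k, ϖ j (hc k) = if j = k then (1 : ℂ) else 0)
    (hF : ∀ j, Ex H α (ϖ j)) {l : Module.Dual ℂ H} (hl : IsDomInt hc l) : Ex H α l := by
  choose n hn using hl
  have h1 : ∀ j (k : ℕ), Ex H α ((k : ℂ) • ϖ j) := by
    intro j k
    induction k with
    | zero => simpa using Ex_zero α
    | succ k ih =>
      have := Ex_add hb hcr ih (hF j)
      simpa [add_smul] using this
  have h2 : ∀ s : Finset (Fin r), Ex H α (∑ j ∈ s, (n j : ℂ) • ϖ j) := by
    intro s
    induction s using Finset.induction_on with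
    | empty => simpa using Ex_zero α
    | insert a s ha ih =>
      rw [Finset.sum_insert ha]
      exact Ex_add hb hcr (h1 _ _) ih
  have h3 : l = ∑ j, (n j : ℂ) • ϖ j := by
    apply dual_ext hb hcr
    intro k
    rw [hn, LinearMap.sum_apply]
    simp [hϖ]
  rw [h3]
  exact h2 _

end Part6


section Part7

open LieAlgebra.IsKilling

variable [FiniteDimensional ℂ L] [IsKilling ℂ L]
variable {H : LieSubalgebra ℂ L} [H.IsCartanSubalgebra]
variable {X : Type} [AddCommGroup X] [Module ℂ X] [LieRingModule L X] [LieModule ℂ L X]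
variable {F : Type} [AddCommGroup F] [Module ℂ F] [LieRingModule L F] [LieModule ℂ L F]
variable {V : Type} [AddCommGroup V] [Module ℂ V] [LieRingModule L V] [LieModule ℂ L V]

/-- words in positive root vectors applied to a lowest vector -/
lemma low_induct {r : ℕ} {α : Fin r → Module.Dual ℂ H} (hb : IsBase H α) {l : Module.Dual ℂ H}
    {u : F} (hu : HW H (-α) l u) (P : Submodule ℂ F) (h0 : u ∈ P)
    (h1 : ∀ χ, IsPosRoot H α χ → ∀ e ∈ rootSpace H ⇑χ, ∀ w ∈ P, ⁅e, w⁆ ∈ P) (y : F) : y ∈ P := by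
  have h2 := hu.span hb.neg y
  have h3 : Submodule.span ℂ {w | Words H (-α) u w} ≤ P := by
    rw [Submodule.span_le]
    intro w hw
    have hw' : Words H (-α) u w := hw
    change w ∈ P
    clear hw h2
    induction hw' with
    | base => exact h0
    | step χ hχ f hf w hw ih =>
      exact h1 (-χ) ((isPosRoot_neg_iff α χ).mp hχ) f hf w ih
  exact h3 h2

lemma bil_zero {r : ℕ} {α : Fin r → Module.Dual ℂ H} (hb : IsBase H α) {l n : Module.Dual ℂ H}
    {v : V} {u : F} (hv : HW H α n v) (hu : HW H (-α) l u) (B : V →ₗ[ℂ] F →ₗ[ℂ] ℂ)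
    (hB : ∀ (x : L) (w : V) (y : F), B ⁅x, w⁆ y + B w ⁅x, y⁆ = 0) (h0 : B v u = 0)
    (a : V) (b : F) : B a b = 0 := by
  have h1 : ∀ y, y ∈ LinearMap.ker (B v) := by
    apply low_induct hb hu
    · exact h0
    · intro χ hχ e he w _
      have := hB e v w
      rw [hv.sing χ hχ e he] at this
      simpa using this
  let N : LieSubmodule ℂ L V :=
    { LinearMap.ker B with
      lie_mem := by
        intro x m hm
        have hm' : B m = 0 := hm
        change B ⁅x, m⁆ = 0
        ext y
        have := hB x m y
        rw [hm'] at this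
        simpa using this }
  have h2 : a ∈ N := hv.eq_top N (x := v) (LinearMap.ext h1) hv.ne a
  have h3 : B a = 0 := h2
  rw [h3]; rfl

lemma pair_ne {r : ℕ} {α : Fin r → Module.Dual ℂ H} (hb : IsBase H α) {l n : Module.Dual ℂ H}
    {v : V} {u : F} (hv : HW H α n v) (hu : HW H (-α) l u) (B : V →ₗ[ℂ] F →ₗ[ℂ] ℂ)
    (hnd : ∀ w, (∀ y, B w y = 0) → w = 0)
    (hB : ∀ (x : L) (w : V) (y : F), B ⁅x, w⁆ y + B w ⁅x, y⁆ = 0) : B v u ≠ 0 :=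
  fun h0 => hv.ne (hnd v (fun y => bil_zero hb hv hu B hB h0 v y))

lemma pair_wt {r : ℕ} {α : Fin r → Module.Dual ℂ H} (hb : IsBase H α) {l n : Module.Dual ℂ H}
    {v : V} {u : F} (hv : HW H α n v) (hu : HW H (-α) l u) (B : V →ₗ[ℂ] F →ₗ[ℂ] ℂ)
    (hnd : ∀ w, (∀ y, B w y = 0) → w = 0)
    (hB : ∀ (x : L) (w : V) (y : F), B ⁅x, w⁆ y + B w ⁅x, y⁆ = 0) : l = -n := by
  have h0 := pair_ne hb hv hu B hnd hB
  ext h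
  have h1 := hB (h : L) v u
  rw [hv.wt h, hu.wt h] at h1
  simp only [map_smul, LinearMap.smul_apply, smul_eq_mul] at h1
  have h2 : (n h + l h) * B v u = 0 := by linear_combination h1
  rcases mul_eq_zero.mp h2 with h3 | h3
  · simp only [LinearMap.neg_apply]; linear_combination h3
  · exact absurd h3 h0

lemma lt_lie (x y : L) (t : X ⊗[ℂ] F) : ⁅x, LinearMap.lTensor X (toEnd ℂ L F y) t⁆ =
    LinearMap.lTensor X (toEnd ℂ L F ⁅x, y⁆) t + LinearMap.lTensor X (toEnd ℂ L F y) ⁅x, t⁆ := by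
  induction t using TensorProduct.induction_on with
  | zero => simp
  | add a b ha hb => simp only [map_add, lie_add, ha, hb]; abel
  | tmul a b =>
    simp only [LinearMap.lTensor_tmul, toEnd_apply_apply, TensorProduct.LieModule.lie_tmul_right,
      map_add, lie_lie, TensorProduct.tmul_sub]
    abel

/-- the equivariant map attached to a Cartan component -/
lemma phi_exists [FiniteDimensional ℂ X] [FiniteDimensional ℂ F] {r : ℕ}
    {α : Fin r → Module.Dual ℂ H} {hc : Fin r → H}
    (hb : IsBase H α) (hcr : ∀ j, IsCoroot H (α j) (hc j)) {l n : Module.Dual ℂ H}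
    {x : X} {f : F} (hx : HW H α l x) (hf : HW H α n f) {v : V} (hv : HW H α (l + n) v)
    {n' : Module.Dual ℂ H} {f' : F} (hf' : HW H (-α) n' f') :
    ∃ (φ : L →ₗ[ℂ] V →ₗ[ℂ] V) (l'' : Module.Dual ℂ H) (u : V),
      (∀ (x y : L) (a : V), ⁅x, φ y a⁆ = φ ⁅x, y⁆ a + φ y ⁅x, a⁆) ∧ HW H (-α) l'' u ∧
      (∀ h : H, φ h v = n h • v) ∧ ∀ h : H, φ h u = n' h • u := by
  obtain ⟨l', x', hx'⟩ := hx.low hb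
  obtain ⟨i, p, hpi, hiv, hip⟩ := cartan_embed hb hcr hx hf hv hx' hf'
  let φ : L →ₗ[ℂ] V →ₗ[ℂ] V := LinearMap.mk₂ ℂ
    (fun y a => p (LinearMap.lTensor X (toEnd ℂ L F y) (i a)))
    (by intro a b c; simp [LinearMap.lTensor_add])
    (by intro a b c; simp [LinearMap.lTensor_smul])
    (by intro a b c; simp)
    (by intro a b c; simp)
  have hφ : ∀ y a, φ y a = p (LinearMap.lTensor X (toEnd ℂ L F y) (i a)) := fun y a => rfl
  refine ⟨φ, l' + n', p (x' ⊗ₜ[ℂ] f'), ?_, ⟨hv.simple, ?_, ?_, ?_⟩, ?_, ?_⟩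
  · intro x y a
    rw [hφ, hφ, hφ, ← LieModuleHom.map_lie, lt_lie, map_add, LieModuleHom.map_lie i]
  · intro h0
    rw [h0, map_zero] at hip
    exact tmul_ne hx'.ne hf'.ne hip.symm
  · exact wt_map p (tmul_wt hx'.wt hf'.wt)
  · exact sing_map p (tmul_sing hx'.sing hf'.sing)
  · intro h
    rw [hφ, hiv, LinearMap.lTensor_tmul, toEnd_apply_apply, hf.wt h, TensorProduct.tmul_smul,
      map_smul, ← hiv, hpi]
  · intro h
    rw [hφ, hip, LinearMap.lTensor_tmul, toEnd_apply_apply, hf'.wt h, TensorProduct.tmul_smul,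
      map_smul]

/-- a self-dual module has a form which is symmetric or antisymmetric -/
lemma bil_sign [FiniteDimensional ℂ V] {r : ℕ} {α : Fin r → Module.Dual ℂ H} (hb : IsBase H α)
    {μ l : Module.Dual ℂ H}
    {v u : V} (hv : HW H α μ v) (hu : HW H (-α) l u) (B : V →ₗ[ℂ] V →ₗ[ℂ] ℂ)
    (hnd : ∀ w, (∀ y, B w y = 0) → w = 0) (hnd' : ∀ y, (∀ w, B w y = 0) → y = 0)
    (hB : ∀ (x : L) (w : V) (y : V), B ⁅x, w⁆ y + B w ⁅x, y⁆ = 0) :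
    ∃ z : ℂ, (z = 1 ∨ z = -1) ∧ (∀ a b, B a b = z * B b a) ∧
      (IsOrthogonalRep (L := L) V ↔ z = 1) ∧ (IsSymplecticRep (L := L) V ↔ z = -1) := by
  have h1 := pair_ne hb hv hu B hnd hB
  have h2 : B u v ≠ 0 := pair_ne hb hv hu B.flip hnd' (fun x w y => by
    have := hB x y w
    simp only [LinearMap.flip_apply]
    linear_combination this)
  have key : ∀ B' : V →ₗ[ℂ] V →ₗ[ℂ] ℂ,
      (∀ (x : L) (w : V) (y : V), B' ⁅x, w⁆ y + B' w ⁅x, y⁆ = 0) → ∀ a b,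
      B' a b = (B' v u / B v u) * B a b := by
    intro B' hB' a b
    have := bil_zero hb hv hu (B' - (B' v u / B v u) • B) (by
      intro x w y
      simp only [LinearMap.sub_apply, LinearMap.smul_apply, smul_eq_mul]
      linear_combination hB' x w y - (B' v u / B v u) * hB x w y) (by
      simp only [LinearMap.sub_apply, LinearMap.smul_apply, smul_eq_mul]
      field_simp
      ring) a b
    simp only [LinearMap.sub_apply, LinearMap.smul_apply, smul_eq_mul] at this
    linear_combination this
  have kf := key B.flip (fun x w y => by
    have := hB x y w
    simp only [LinearMap.flip_apply]
    linear_combination this)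
  simp only [LinearMap.flip_apply] at kf
  set z := B u v / B v u with hz
  have hz2 : z * z = 1 := by
    have e1 := kf u v
    have e2 := kf v u
    rw [e2, ← mul_assoc] at e1
    have : (z * z - 1) * B v u = 0 := by linear_combination -e1
    rcases mul_eq_zero.mp this with h | h
    · linear_combination h
    · exact absurd h h1
  have hz1 : z = 1 ∨ z = -1 := by
    have : (z - 1) * (z + 1) = 0 := by linear_combination hz2
    rcases mul_eq_zero.mp this with h | h
    · left; linear_combination h
    · right; linear_combination h
  have hk : ∀ B' : V →ₗ[ℂ] V →ₗ[ℂ] ℂ, (∀ v, (∀ w, B' v w = 0) → v = 0) →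
      (∀ (x : L) (w : V) (y : V), B' ⁅x, w⁆ y + B' w ⁅x, y⁆ = 0) → B' v u ≠ 0 ∧
      B' u v = z * B' v u := by
    intro B' hn' hB'
    refine ⟨pair_ne hb hv hu B' hn' hB', ?_⟩
    rw [key B' hB' u v, kf v u]
    field_simp
  refine ⟨z, hz1, fun a b => kf b a, ⟨?_, ?_⟩, ⟨?_, ?_⟩⟩
  · rintro ⟨B', hs, hn', hB'⟩
    obtain ⟨e1, e2⟩ := hk B' hn' hB'
    rw [hs u v] at e2
    have : (z - 1) * B' v u = 0 := by linear_combination -e2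
    rcases mul_eq_zero.mp this with h | h
    · linear_combination h
    · exact absurd h e1
  · intro h
    rw [h] at kf
    exact ⟨B, fun a b => by rw [kf b a, one_mul], hnd, hB⟩
  · rintro ⟨B', hs, hn', hB'⟩
    obtain ⟨e1, e2⟩ := hk B' hn' hB'
    have e3 := hs (u + v)
    simp only [map_add, LinearMap.add_apply, hs] at e3
    have : (z + 1) * B' v u = 0 := by linear_combination e3 - e2
    rcases mul_eq_zero.mp this with h | h
    · linear_combination h
    · exact absurd h e1
  · intro h
    rw [h] at kf
    refine ⟨B, fun a => ?_, hnd, hB⟩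
    have := kf a a
    linear_combination this / 2

end Part7


section Part8

/-- dimension count for an involution -/
lemma invol_count {T J : Type} [AddCommGroup T] [Module ℂ T] [Fintype J] [DecidableEq J]
    (N : Submodule ℂ T) (S : T →ₗ[ℂ] T) (hSS : ∀ t, S (S t) = t) (hSN : ∀ t ∈ N, S t ∈ N)
    (b : J → T) (hbN : ∀ j, b j ∈ N) (g : T →ₗ[ℂ] (J → ℂ)) (hg : ∀ t ∈ N, g t = 0 → t = 0)
    (hgb : ∀ j, g (b j) = Pi.single j 1) (σ : J → J) (z : ℂ)
    (hgS : ∀ j, g (S (b j)) = z • Pi.single (σ j) 1) :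
    (finrank ℂ ↥(N ⊓ LinearMap.ker (S - LinearMap.id)) : ℂ) =
      ∑ j, (1 / 2 + if σ j = j then z / 2 else 0) := by
  let e0 : N →ₗ[ℂ] (J → ℂ) := g ∘ₗ N.subtype
  have he0 : Function.Bijective e0 := by
    constructor
    · rw [injective_iff_map_eq_zero]
      intro a ha
      exact Subtype.ext (hg a a.2 ha)
    · intro f
      refine ⟨∑ j, f j • ⟨b j, hbN j⟩, ?_⟩
      rw [map_sum]
      have : ∀ j, e0 (f j • ⟨b j, hbN j⟩) = f j • Pi.single j 1 := by
        intro j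
        rw [map_smul]
        exact congrArg _ (hgb j)
      simp only [this]
      ext k
      simp [Finset.sum_apply, Pi.single_apply]
  let e : N ≃ₗ[ℂ] (J → ℂ) := LinearEquiv.ofBijective e0 he0
  let β : Basis J ℂ N := Basis.ofEquivFun e
  have hfd : FiniteDimensional ℂ N := Module.Basis.finiteDimensional_of_finite β
  have hβ : ∀ j, β j = ⟨b j, hbN j⟩ := by
    intro j
    rw [Basis.coe_ofEquivFun]
    change e.symm (Pi.single j 1) = _
    rw [LinearEquiv.symm_apply_eq]
    exact (hgb j).symm
  let f : N →ₗ[ℂ] N := (1 / 2 : ℂ) • (LinearMap.id + S.restrict hSN)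
  have hf : ∀ t : N, ((f t : N) : T) = (1 / 2 : ℂ) • ((t : T) + S t) := fun t => rfl
  have hproj : LinearMap.IsProj
      (Submodule.comap N.subtype (N ⊓ LinearMap.ker (S - LinearMap.id))) f := by
    constructor
    · intro x
      rw [Submodule.mem_comap]
      refine ⟨(f x).2, ?_⟩
      rw [SetLike.mem_coe, LinearMap.mem_ker, LinearMap.sub_apply, Submodule.subtype_apply, hf, map_smul, map_add,
        hSS, LinearMap.id_apply, add_comm, sub_self]
    · intro x hx
      rw [Submodule.mem_comap] at hx
      have h1 := hx.2
      rw [SetLike.mem_coe, LinearMap.mem_ker, LinearMap.sub_apply, Submodule.subtype_apply, sub_eq_zero] at h1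
      apply Subtype.ext
      rw [hf, h1, LinearMap.id_apply, ← two_smul ℂ, smul_smul]
      norm_num
  have htr := hproj.trace
  rw [(Submodule.comapSubtypeEquivOfLe (inf_le_left : N ⊓ LinearMap.ker (S - LinearMap.id) ≤ N)).finrank_eq]
    at htr
  rw [← htr, LinearMap.trace_eq_matrix_trace ℂ β, Matrix.trace]
  refine Finset.sum_congr rfl fun j _ => ?_
  rw [Matrix.diag_apply, LinearMap.toMatrix_apply]
  change e (f (β j)) j = _
  have h2 : e (f (β j)) = g (f (β j) : N) := rfl
  rw [h2, hf, hβ, map_smul, map_add, hgb, hgS]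
  simp only [Pi.smul_apply, Pi.add_apply, Pi.single_apply, smul_eq_mul, if_true]
  by_cases h : σ j = j
  · rw [if_pos h, if_pos h.symm]; ring
  · rw [if_neg h, if_neg (fun h' => h h'.symm)]; ring

end Part8


section Part9

open LieAlgebra.IsKilling

variable [FiniteDimensional ℂ L] [IsKilling ℂ L]
variable {H : LieSubalgebra ℂ L} [H.IsCartanSubalgebra]
variable {V : Type} [AddCommGroup V] [Module ℂ V] [LieRingModule L V] [LieModule ℂ L V]

lemma triple_lie (y x : L) (a b : V) : ⁅y, x ⊗ₜ[ℂ] (a ⊗ₜ[ℂ] b)⁆ =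
    ⁅y, x⁆ ⊗ₜ[ℂ] (a ⊗ₜ[ℂ] b) + x ⊗ₜ[ℂ] (⁅y, a⁆ ⊗ₜ[ℂ] b) + x ⊗ₜ[ℂ] (a ⊗ₜ[ℂ] ⁅y, b⁆) := by
  rw [TensorProduct.LieModule.lie_tmul_right, TensorProduct.LieModule.lie_tmul_right,
    TensorProduct.tmul_add, add_assoc]

lemma triple_span (P : Submodule ℂ (L ⊗[ℂ] (V ⊗[ℂ] V)))
    (h : ∀ x a b, x ⊗ₜ[ℂ] (a ⊗ₜ[ℂ] b) ∈ P) (t) : t ∈ P := by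
  induction t using TensorProduct.induction_on with
  | zero => exact P.zero_mem
  | add a b ha hb => exact P.add_mem ha hb
  | tmul x w =>
    induction w using TensorProduct.induction_on with
    | zero => simp
    | add a b ha hb => rw [TensorProduct.tmul_add]; exact P.add_mem ha hb
    | tmul a b => exact h x a b

lemma triple_ext {M : Type} [AddCommGroup M] [Module ℂ M] (f g : L ⊗[ℂ] (V ⊗[ℂ] V) →ₗ[ℂ] M)
    (h : ∀ x a b, f (x ⊗ₜ[ℂ] (a ⊗ₜ[ℂ] b)) = g (x ⊗ₜ[ℂ] (a ⊗ₜ[ℂ] b))) (t) : f t = g t := by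
  have := triple_span (LinearMap.eqLocus f g) h t
  exact this

lemma swap_tmul (x : L) (a b : V) :
    swapMap L V (x ⊗ₜ[ℂ] (a ⊗ₜ[ℂ] b)) = x ⊗ₜ[ℂ] (b ⊗ₜ[ℂ] a) := by
  simp [swapMap]

lemma swap_swap (t : L ⊗[ℂ] (V ⊗[ℂ] V)) : swapMap L V (swapMap L V t) = t := by
  refine triple_ext (swapMap L V ∘ₗ swapMap L V) LinearMap.id ?_ t
  intro x a b
  simp [swap_tmul]

lemma swap_lie (y : L) (t : L ⊗[ℂ] (V ⊗[ℂ] V)) : swapMap L V ⁅y, t⁆ = ⁅y, swapMap L V t⁆ := by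
  refine triple_ext (swapMap L V ∘ₗ toEnd ℂ L _ y) (toEnd ℂ L _ y ∘ₗ swapMap L V) ?_ t
  intro x a b
  simp only [LinearMap.comp_apply, toEnd_apply_apply, swap_tmul, triple_lie, map_add]
  abel

lemma exists_E [FiniteDimensional ℂ V] (B : V →ₗ[ℂ] V →ₗ[ℂ] ℂ)
    (hnd : ∀ w, (∀ y, B w y = 0) → w = 0) :
    ∃ E : (L ⊗[ℂ] (V ⊗[ℂ] V)) ≃ₗ[ℂ] Module.Dual ℂ (L ⊗[ℂ] (V ⊗[ℂ] V)),
      ∀ y a b x c d, E (y ⊗ₜ[ℂ] (a ⊗ₜ[ℂ] b)) (x ⊗ₜ[ℂ] (c ⊗ₜ[ℂ] d)) =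
        killingForm ℂ L y x * (B a c * B b d) := by
  have hBi : Function.Injective B := by
    rw [injective_iff_map_eq_zero]
    intro a ha
    exact hnd a (fun y => by rw [ha]; rfl)
  have hKi : Function.Injective (killingForm ℂ L) := by
    have := IsKilling.ker_killingForm_eq_bot ℂ L
    exact LinearMap.ker_eq_bot.mp this
  let eV : V ≃ₗ[ℂ] Module.Dual ℂ V := LinearMap.linearEquivOfInjective B hBi
    (Subspace.dual_finrank_eq).symm
  let eL : L ≃ₗ[ℂ] Module.Dual ℂ L := LinearMap.linearEquivOfInjective (killingForm ℂ L) hKi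
    (Subspace.dual_finrank_eq).symm
  refine ⟨TensorProduct.congr eL
    (TensorProduct.congr eV eV ≪≫ₗ TensorProduct.dualDistribEquiv ℂ V V) ≪≫ₗ
      TensorProduct.dualDistribEquiv ℂ L (V ⊗[ℂ] V), ?_⟩
  intro y a b x c d
  rfl

lemma E_lie (B : V →ₗ[ℂ] V →ₗ[ℂ] ℂ)
    (hB : ∀ (x : L) (w : V) (y : V), B ⁅x, w⁆ y + B w ⁅x, y⁆ = 0)
    (E : (L ⊗[ℂ] (V ⊗[ℂ] V)) ≃ₗ[ℂ] Module.Dual ℂ (L ⊗[ℂ] (V ⊗[ℂ] V)))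
    (hE : ∀ y a b x c d, E (y ⊗ₜ[ℂ] (a ⊗ₜ[ℂ] b)) (x ⊗ₜ[ℂ] (c ⊗ₜ[ℂ] d)) =
        killingForm ℂ L y x * (B a c * B b d)) (q : L) (t w : L ⊗[ℂ] (V ⊗[ℂ] V)) :
    E ⁅q, t⁆ w = - E t ⁅q, w⁆ := by
  have hk : ∀ y x : L, killingForm ℂ L ⁅q, y⁆ x = - killingForm ℂ L y ⁅q, x⁆ := by
    intro y x
    have := LieModule.traceForm_apply_lie_apply ℂ L L y q x
    have h2 : killingForm ℂ L ⁅y, q⁆ x = killingForm ℂ L y ⁅q, x⁆ := this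
    rw [← h2, ← lie_skew, map_neg, LinearMap.neg_apply]
  have hB' : ∀ y x, B ⁅q, y⁆ x = - B y ⁅q, x⁆ := fun y x => by linear_combination hB q y x
  refine triple_ext (E ⁅q, t⁆) (-(E t ∘ₗ toEnd ℂ L _ q)) ?_ w
  intro x c d
  refine triple_ext (LinearMap.applyₗ (x ⊗ₜ[ℂ] (c ⊗ₜ[ℂ] d)) ∘ₗ E.toLinearMap ∘ₗ toEnd ℂ L _ q)
    (-(LinearMap.applyₗ ⁅q, x ⊗ₜ[ℂ] (c ⊗ₜ[ℂ] d)⁆ ∘ₗ E.toLinearMap)) ?_ t |>.trans ?_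
  · intro y a b
    simp only [LinearMap.comp_apply, LinearEquiv.coe_coe, LinearMap.applyₗ_apply_apply,
      LinearMap.neg_apply, toEnd_apply_apply, triple_lie, map_add, LinearMap.add_apply, hE, hk, hB']
    ring
  · simp

lemma E_swap (B : V →ₗ[ℂ] V →ₗ[ℂ] ℂ)
    (E : (L ⊗[ℂ] (V ⊗[ℂ] V)) ≃ₗ[ℂ] Module.Dual ℂ (L ⊗[ℂ] (V ⊗[ℂ] V)))
    (hE : ∀ y a b x c d, E (y ⊗ₜ[ℂ] (a ⊗ₜ[ℂ] b)) (x ⊗ₜ[ℂ] (c ⊗ₜ[ℂ] d)) =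
        killingForm ℂ L y x * (B a c * B b d)) (t w : L ⊗[ℂ] (V ⊗[ℂ] V)) :
    E (swapMap L V t) w = E t (swapMap L V w) := by
  refine triple_ext (E (swapMap L V t)) (E t ∘ₗ swapMap L V) ?_ w
  intro x c d
  refine triple_ext (LinearMap.applyₗ (x ⊗ₜ[ℂ] (c ⊗ₜ[ℂ] d)) ∘ₗ E.toLinearMap ∘ₗ swapMap L V)
    (LinearMap.applyₗ (x ⊗ₜ[ℂ] (d ⊗ₜ[ℂ] c)) ∘ₗ E.toLinearMap) ?_ t |>.trans ?_
  · intro y a b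
    simp only [LinearMap.comp_apply, swap_tmul, LinearEquiv.coe_coe, LinearMap.applyₗ_apply_apply,
      hE]
    ring
  · simp [swap_tmul]

/-- the trilinear form attached to an equivariant map -/
noncomputable def tri (B : V →ₗ[ℂ] V →ₗ[ℂ] ℂ) (φ : L →ₗ[ℂ] V →ₗ[ℂ] V) :
    Module.Dual ℂ (L ⊗[ℂ] (V ⊗[ℂ] V)) :=
  TensorProduct.lift B ∘ₗ LinearMap.rTensor V (TensorProduct.lift φ) ∘ₗ
    (TensorProduct.assoc ℂ L V V).symm.toLinearMap

lemma tri_tmul (B : V →ₗ[ℂ] V →ₗ[ℂ] ℂ) (φ : L →ₗ[ℂ] V →ₗ[ℂ] V) (x : L) (a b : V) :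
    tri B φ (x ⊗ₜ[ℂ] (a ⊗ₜ[ℂ] b)) = B (φ x a) b := by
  simp [tri]

lemma tri_inv (B : V →ₗ[ℂ] V →ₗ[ℂ] ℂ)
    (hB : ∀ (x : L) (w : V) (y : V), B ⁅x, w⁆ y + B w ⁅x, y⁆ = 0) (φ : L →ₗ[ℂ] V →ₗ[ℂ] V)
    (hφ : ∀ (x y : L) (a : V), ⁅x, φ y a⁆ = φ ⁅x, y⁆ a + φ y ⁅x, a⁆) (y : L)
    (w : L ⊗[ℂ] (V ⊗[ℂ] V)) : tri B φ ⁅y, w⁆ = 0 := by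
  refine triple_ext (tri B φ ∘ₗ toEnd ℂ L _ y) 0 ?_ w
  intro x a b
  have h1 := hB y (φ x a) b
  rw [hφ] at h1
  simp only [map_add, LinearMap.add_apply] at h1
  simp only [LinearMap.comp_apply, toEnd_apply_apply, triple_lie, map_add, tri_tmul,
    LinearMap.zero_apply]
  exact h1

/-- an invariant trilinear form vanishes on coroots orthogonal to the weight -/
lemma tri_vanish [FiniteDimensional ℂ V] {r : ℕ} {α : Fin r → Module.Dual ℂ H} {hc : Fin r → H}
    (hb : IsBase H α) (hcr : ∀ j, IsCoroot H (α j) (hc j)) {μ l : Module.Dual ℂ H} {v u : V}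
    (hv : HW H α μ v) (hu : HW H (-α) l u) (θ : Module.Dual ℂ (L ⊗[ℂ] (V ⊗[ℂ] V)))
    (hθ : ∀ (y : L) w, θ ⁅y, w⁆ = 0) {j : Fin r} (hj : μ (hc j) = 0) :
    θ ((hc j : L) ⊗ₜ[ℂ] (v ⊗ₜ[ℂ] u)) = 0 := by
  obtain ⟨e, f, he, hf, ht⟩ := sl2_of_coroot (hcr j)
  have P : ht.HasPrimitiveVectorWith v (μ (hc j)) :=
    { ne_zero := hv.ne
      lie_h := hv.wt (hc j)
      lie_e := hv.sing _ (simple_pos hb j) e he }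
  have hfv : ⁅f, v⁆ = 0 := by
    have := P.pow_toEnd_f_eq_zero_of_eq_nat (n := 0) (by simpa using hj)
    simpa using this
  have hfu : ⁅f, u⁆ = 0 :=
    hu.sing (-(α j)) ((isPosRoot_neg_iff α _).mpr (by simpa using simple_pos hb j)) f hf
  have h1 := hθ f (e ⊗ₜ[ℂ] (v ⊗ₜ[ℂ] u))
  rw [triple_lie, hfv, hfu] at h1
  have h2 : ⁅f, e⁆ = -(hc j : L) := by rw [← lie_skew, ht.lie_e_f]
  rw [h2] at h1
  simpa [TensorProduct.neg_tmul] using h1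

/-- an invariant trilinear form is determined by its values on extremal vectors -/
lemma tri_zero [FiniteDimensional ℂ V] {r : ℕ} {α : Fin r → Module.Dual ℂ H} {hc : Fin r → H}
    (hb : IsBase H α) (hcr : ∀ j, IsCoroot H (α j) (hc j)) {μ : Module.Dual ℂ H} {v u : V}
    (hv : HW H α μ v) (hu : HW H (-α) (-μ) u) (θ : Module.Dual ℂ (L ⊗[ℂ] (V ⊗[ℂ] V)))
    (hθ : ∀ (y : L) w, θ ⁅y, w⁆ = 0)
    (h0 : ∀ j, θ ((hc j : L) ⊗ₜ[ℂ] (v ⊗ₜ[ℂ] u)) = 0) : θ = 0 := by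
  let A1 : L →ₗ[ℂ] ℂ := θ ∘ₗ (TensorProduct.mk ℂ L (V ⊗[ℂ] V)).flip (v ⊗ₜ[ℂ] u)
  have hA1 : ∀ x, A1 x = θ (x ⊗ₜ[ℂ] (v ⊗ₜ[ℂ] u)) := fun x => rfl
  have hH : A1 ∘ₗ H.toSubmodule.subtype = 0 := dual_zero hb hcr (d := A1 ∘ₗ H.toSubmodule.subtype) h0
  have hroot : ∀ χ : Module.Dual ℂ H, IsRoot H χ → ∀ e ∈ rootSpace H ⇑χ, A1 e = 0 := by
    intro χ hχ e he
    obtain ⟨h, hh⟩ : ∃ h, χ h ≠ 0 := by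
      by_contra hcon
      push Not at hcon
      exact hχ.1 (LinearMap.ext hcon)
    have h1 := hθ (h : L) (e ⊗ₜ[ℂ] (v ⊗ₜ[ℂ] u))
    have h2 : ⁅(h : L), e⁆ = χ h • e := lie_eq_smul_of_mem_rootSpace he h
    rw [triple_lie, h2, hv.wt h, hu.wt h] at h1
    simp only [← TensorProduct.smul_tmul', TensorProduct.tmul_smul, map_add, map_smul, smul_eq_mul,
      LinearMap.neg_apply] at h1
    have h3 : χ h * A1 e = 0 := by
      rw [hA1]
      linear_combination h1
    exact (mul_eq_zero.mp h3).resolve_left hh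
  have h1 : ∀ x, x ∈ LinearMap.ker A1 := by
    apply decomp hb
    · intro x
      exact congrArg (fun f => f x) hH
    · intro χ hχ e he
      exact hroot χ hχ.1 e he
    · intro χ hχ e he
      exact hroot (-χ) hχ.1.neg e he
  have h2 : ∀ y : V, ∀ x : L, θ (x ⊗ₜ[ℂ] (v ⊗ₜ[ℂ] y)) = 0 := by
    let P : Submodule ℂ V :=
      { carrier := {y | ∀ x : L, θ (x ⊗ₜ[ℂ] (v ⊗ₜ[ℂ] y)) = 0}
        add_mem' := by
          intro a b ha hb x
          have ha' : ∀ x : L, θ (x ⊗ₜ[ℂ] (v ⊗ₜ[ℂ] a)) = 0 := ha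
          have hb' : ∀ x : L, θ (x ⊗ₜ[ℂ] (v ⊗ₜ[ℂ] b)) = 0 := hb
          rw [TensorProduct.tmul_add, TensorProduct.tmul_add, map_add, ha', hb', add_zero]
        zero_mem' := by intro x; simp
        smul_mem' := by
          intro c a ha x
          have ha' : ∀ x : L, θ (x ⊗ₜ[ℂ] (v ⊗ₜ[ℂ] a)) = 0 := ha
          rw [TensorProduct.tmul_smul, TensorProduct.tmul_smul, map_smul, ha', smul_zero] }
    refine low_induct hb hu P h1 ?_
    intro χ hχ e he w hw x
    have hw' : ∀ x : L, θ (x ⊗ₜ[ℂ] (v ⊗ₜ[ℂ] w)) = 0 := hw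
    have h3 := hθ e (x ⊗ₜ[ℂ] (v ⊗ₜ[ℂ] w))
    rw [triple_lie, hv.sing χ hχ e he] at h3
    simpa [hw'] using h3
  let N : LieSubmodule ℂ L V :=
    { carrier := {a | ∀ (x : L) (b : V), θ (x ⊗ₜ[ℂ] (a ⊗ₜ[ℂ] b)) = 0}
      add_mem' := by
        intro a a' ha hb x b
        have ha' : ∀ (x : L) b, θ (x ⊗ₜ[ℂ] (a ⊗ₜ[ℂ] b)) = 0 := ha
        have hb' : ∀ (x : L) b, θ (x ⊗ₜ[ℂ] (a' ⊗ₜ[ℂ] b)) = 0 := hb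
        rw [TensorProduct.add_tmul, TensorProduct.tmul_add, map_add, ha', hb', add_zero]
      zero_mem' := by intro x b; simp
      smul_mem' := by
        intro c a ha x b
        have ha' : ∀ (x : L) b, θ (x ⊗ₜ[ℂ] (a ⊗ₜ[ℂ] b)) = 0 := ha
        rw [← TensorProduct.smul_tmul', TensorProduct.tmul_smul, map_smul, ha', smul_zero]
      lie_mem := by
        intro y a ha x b
        have ha' : ∀ (x : L) b, θ (x ⊗ₜ[ℂ] (a ⊗ₜ[ℂ] b)) = 0 := ha
        have h3 := hθ y (x ⊗ₜ[ℂ] (a ⊗ₜ[ℂ] b))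
        rw [triple_lie] at h3
        simpa [ha'] using h3 }
  have h3 : ∀ a, a ∈ N := hv.eq_top N (x := v) (fun x b => h2 b x) hv.ne
  refine LinearMap.ext fun t => triple_ext θ 0 ?_ t
  intro x a b
  exact h3 a x b

end Part9


section Part10

open LieAlgebra.IsKilling

variable [FiniteDimensional ℂ L] [IsKilling ℂ L]
variable {H : LieSubalgebra ℂ L} [H.IsCartanSubalgebra]

lemma phi_fund {r : ℕ} {α : Fin r → Module.Dual ℂ H} {hc : Fin r → H}
    (hb : IsBase H α) (hcr : ∀ j, IsCoroot H (α j) (hc j))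
    (ϖ : Fin r → Module.Dual ℂ H) (hϖ : ∀ j k, ϖ j (hc k) = if j = k then (1 : ℂ) else 0)
    (F : Fin r → Type) [∀ j, AddCommGroup (F j)] [∀ j, Module ℂ (F j)]
    [∀ j, LieRingModule L (F j)] [∀ j, LieModule ℂ L (F j)] [∀ j, FiniteDimensional ℂ (F j)]
    (hF : ∀ j, IsHWIrrep H α (ϖ j) (F j))
    (σ : Fin r → Fin r) (hσ : ∀ j, IsDualPair (L := L) (F (σ j)) (F j))
    {μ : Module.Dual ℂ H} (hμ : IsDomInt hc μ)
    {V : Type} [AddCommGroup V] [Module ℂ V] [LieRingModule L V]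
    [LieModule ℂ L V] [FiniteDimensional ℂ V] {v u : V} (hv : HW H α μ v)
    (hu : HW H (-α) (-μ) u) (B : V →ₗ[ℂ] V →ₗ[ℂ] ℂ) (hnd : ∀ w, (∀ y, B w y = 0) → w = 0)
    (hB : ∀ (x : L) (w : V) (y : V), B ⁅x, w⁆ y + B w ⁅x, y⁆ = 0) (j : Fin r)
    (hj : μ (hc j) ≠ 0) :
    ∃ φ : L →ₗ[ℂ] V →ₗ[ℂ] V, (∀ (x y : L) (a : V), ⁅x, φ y a⁆ = φ ⁅x, y⁆ a + φ y ⁅x, a⁆) ∧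
      (∀ h : H, φ h v = ϖ j h • v) ∧ ∀ h : H, φ h u = -(ϖ (σ j) h) • u := by
  have hEx : ∀ k, Ex H α (ϖ k) := by
    intro k
    obtain ⟨f, hf⟩ := (hF k).exists_hw
    exact ⟨F k, inferInstance, inferInstance, inferInstance, inferInstance, inferInstance, f, hf⟩
  have hdom : IsDomInt hc (μ - ϖ j) := by
    intro k
    obtain ⟨n, hn⟩ := hμ k
    rw [LinearMap.sub_apply, hϖ, hn]
    by_cases hjk : j = k
    · subst hjk
      rw [hn] at hj
      obtain ⟨m, rfl⟩ : ∃ m, n = m + 1 := Nat.exists_eq_succ_of_ne_zero (by exact_mod_cast hj)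
      exact ⟨m, by simp⟩
    · exact ⟨n, by simp [hjk]⟩
  obtain ⟨X, _, _, _, _, _, x, hx⟩ := Ex_dom hb hcr ϖ hϖ hEx hdom
  obtain ⟨f, hf⟩ := (hF j).exists_hw
  obtain ⟨g, hg⟩ := (hF (σ j)).exists_hw
  obtain ⟨n', f', hf'⟩ := hf.low hb
  obtain ⟨Bj, hBj1, hBj2, hBj3⟩ := hσ j
  have hn' := pair_wt hb hg hf' Bj hBj1 hBj3
  have hv' : HW H α (μ - ϖ j + ϖ j) v := by rwa [sub_add_cancel]
  obtain ⟨φ, l, w, h1, hw, h2, h3⟩ := phi_exists hb hcr hx hf hv' hf'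
  have hl := pair_wt hb hv hw B hnd hB
  subst hl hn'
  obtain ⟨a, ha⟩ := wt_top_mult hb.neg hu.wt (hu.top hb.neg w) hw.wt
  have ha0 : a ≠ 0 := by
    rintro rfl
    exact hw.ne (by rw [ha, zero_smul])
  refine ⟨φ, h1, h2, fun h => ?_⟩
  have h4 := h3 h
  rw [ha, map_smul, smul_comm] at h4
  have h5 := smul_right_injective V ha0 h4
  exact h5

end Part10


/-- Suppose `μ = μ̄` (witnessed by a perfect invariant self-pairing of
`V_μ`).  The fundamental representations are `F j`, of highest weight `ϖ j`, and the
opposition involution on fundamental weights is `ϖ̄_j = ϖ (σ j)`, witnessed by perfect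
invariant pairings between `F (σ j)` and `F j`.  Then the dimensions of the `𝔤`-invariant
subspaces of `adj(𝔤) ⊗ S²V_μ` and `adj(𝔤) ⊗ Λ²V_μ` are given by the sums over the indices
`j` with `⟨μ, α_j∨⟩ > 0` of `(1/2)·[ϖ_j ≠ ϖ̄_j] + [ϖ_j = ϖ̄_j]·[V_μ symplectic]`,
respectively `(1/2)·[ϖ_j ≠ ϖ̄_j] + [ϖ_j = ϖ̄_j]·[V_μ orthogonal]`. -/
theorem statement8
    {L : Type} [LieRing L] [LieAlgebra ℂ L] [FiniteDimensional ℂ L]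
    [LieAlgebra.IsSemisimple ℂ L]
    (H : LieSubalgebra ℂ L) [H.IsCartanSubalgebra]
    {r : ℕ} (α : Fin r → Module.Dual ℂ H) (hc : Fin r → H)
    (hbase : IsBase H α) (hcoroot : ∀ j, IsCoroot H (α j) (hc j))
    (ϖ : Fin r → Module.Dual ℂ H)
    (hϖ : ∀ j k, ϖ j (hc k) = if j = k then (1 : ℂ) else 0)
    (F : Fin r → Type) [∀ j, AddCommGroup (F j)] [∀ j, Module ℂ (F j)]
    [∀ j, LieRingModule L (F j)] [∀ j, LieModule ℂ L (F j)] [∀ j, FiniteDimensional ℂ (F j)]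
    (hF : ∀ j, IsHWIrrep H α (ϖ j) (F j))
    (σ : Fin r → Fin r) (hσ : ∀ j, IsDualPair (L := L) (F (σ j)) (F j))
    (μ : Module.Dual ℂ H) (hμ : IsDomInt hc μ)
    (Vμ : Type) [AddCommGroup Vμ] [Module ℂ Vμ] [LieRingModule L Vμ]
    [LieModule ℂ L Vμ] [FiniteDimensional ℂ Vμ]
    (hVμ : IsHWIrrep H α μ Vμ)
    (hselfdual : IsDualPair (L := L) Vμ Vμ) :
    (Module.finrank ℂ (symSquareInvariants L Vμ) : ℚ) =
      ∑ j ∈ Finset.univ.filter (fun j => μ (hc j) ≠ 0),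
        ((if ϖ (σ j) ≠ ϖ j then (1 : ℚ)/2 else 0) +
          (if ϖ (σ j) = ϖ j ∧ IsSymplecticRep (L := L) Vμ then (1 : ℚ) else 0)) ∧
    (Module.finrank ℂ (altSquareInvariants L Vμ) : ℚ) =
      ∑ j ∈ Finset.univ.filter (fun j => μ (hc j) ≠ 0),
        ((if ϖ (σ j) ≠ ϖ j then (1 : ℚ)/2 else 0) +
          (if ϖ (σ j) = ϖ j ∧ IsOrthogonalRep (L := L) Vμ then (1 : ℚ) else 0)) := by
  obtain ⟨v, hv⟩ := hVμ.exists_hw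
  obtain ⟨l, u, hu⟩ := hv.low hbase
  obtain ⟨B, hnd, hnd', hB⟩ := hselfdual
  have hl := pair_wt hbase hv hu B hnd hB
  subst hl
  obtain ⟨z, hz, hsym, hort, hsymp⟩ := bil_sign hbase hv hu B hnd hnd' hB
  have hβ := pair_ne hbase hv hu B hnd hB
  obtain ⟨E, hE⟩ := exists_E (L := L) B hnd
  have hphi := phi_fund hbase hcoroot ϖ hϖ F hF σ hσ hμ hv hu B hnd hB
  let J : Type := {j : Fin r // μ (hc j) ≠ 0}
  have hphi' : ∀ j : J, ∃ φ : L →ₗ[ℂ] Vμ →ₗ[ℂ] Vμ,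
      (∀ (x y : L) (a : Vμ), ⁅x, φ y a⁆ = φ ⁅x, y⁆ a + φ y ⁅x, a⁆) ∧
      (∀ h : H, φ h v = ϖ j.1 h • v) ∧ ∀ h : H, φ h u = -(ϖ (σ j.1) h) • u := fun j => hphi j.1 j.2
  choose φ hφ1 hφ2 hφ3 using hphi'
  let N : Submodule ℂ (L ⊗[ℂ] (Vμ ⊗[ℂ] Vμ)) :=
    (maxTrivSubmodule ℂ L (L ⊗[ℂ] (Vμ ⊗[ℂ] Vμ)) : Submodule ℂ (L ⊗[ℂ] (Vμ ⊗[ℂ] Vμ)))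
  have hN : ∀ t, t ∈ N ↔ ∀ y : L, ⁅y, t⁆ = 0 := fun t => Iff.rfl
  have hNE : ∀ t, t ∈ N → ∀ (y : L) w, E t ⁅y, w⁆ = 0 := by
    intro t ht y w
    have h1 := E_lie B hB E hE y t w
    rw [(hN t).mp ht y, map_zero, LinearMap.zero_apply] at h1
    exact neg_eq_zero.mp h1.symm
  have hSN : ∀ t ∈ N, swapMap L Vμ t ∈ N := by
    intro t ht
    rw [hN] at ht ⊢
    intro y
    rw [← swap_lie, ht, map_zero]
  let b : J → L ⊗[ℂ] (Vμ ⊗[ℂ] Vμ) := fun j => E.symm (tri B (φ j))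
  have hEb : ∀ j, E (b j) = tri B (φ j) := fun j => E.apply_symm_apply _
  have hbN : ∀ j, b j ∈ N := by
    intro j
    rw [hN]
    intro y
    apply E.injective
    rw [map_zero]
    refine LinearMap.ext fun w => ?_
    rw [E_lie B hB E hE, hEb, tri_inv B hB (φ j) (hφ1 j), neg_zero]
    rfl
  let g : (L ⊗[ℂ] (Vμ ⊗[ℂ] Vμ)) →ₗ[ℂ] (J → ℂ) := LinearMap.pi fun j =>
    (B v u)⁻¹ • (LinearMap.applyₗ ((hc j.1 : L) ⊗ₜ[ℂ] (v ⊗ₜ[ℂ] u)) ∘ₗ E.toLinearMap)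
  have hgd : ∀ t (j : J), g t j = (B v u)⁻¹ * E t ((hc j.1 : L) ⊗ₜ[ℂ] (v ⊗ₜ[ℂ] u)) :=
    fun t j => rfl
  have hg : ∀ t ∈ N, g t = 0 → t = 0 := by
    intro t ht h0
    apply E.injective
    rw [map_zero]
    refine tri_zero hbase hcoroot hv hu (E t) (hNE t ht) ?_
    intro j
    by_cases hj : μ (hc j) = 0
    · exact tri_vanish hbase hcoroot hv hu (E t) (hNE t ht) hj
    · have h1 := congrFun h0 ⟨j, hj⟩
      rw [hgd] at h1
      exact (mul_eq_zero.mp h1).resolve_left (inv_ne_zero hβ)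
  have hgb : ∀ j, g (b j) = Pi.single j 1 := by
    intro j
    ext k
    rw [hgd, hEb, tri_tmul, hφ2, map_smul, LinearMap.smul_apply, smul_eq_mul, hϖ, Pi.single_apply]
    by_cases h : j = k
    · subst h
      simp [hβ]
    · have h' : j.1 ≠ k.1 := fun h' => h (Subtype.ext h')
      rw [if_neg h', if_neg (fun h' => h h'.symm)]
      simp
  have hEs : ∀ (j : J) (k : Fin r), E (swapMap L Vμ (b j)) ((hc k : L) ⊗ₜ[ℂ] (v ⊗ₜ[ℂ] u)) =
      -(if σ j.1 = k then (1 : ℂ) else 0) * (z * B v u) := by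
    intro j k
    rw [E_swap B E hE, swap_tmul, hEb, tri_tmul, hφ3, map_smul, LinearMap.smul_apply, smul_eq_mul,
      hϖ, hsym u v]
  have hz0 : z ≠ 0 := by rcases hz with h | h <;> rw [h] <;> norm_num
  have hσJ : ∀ j : J, μ (hc (σ j.1)) ≠ 0 := by
    intro j h0
    have h1 := tri_vanish hbase hcoroot hv hu (E (swapMap L Vμ (b j)))
      (hNE _ (hSN _ (hbN j))) h0
    rw [hEs, if_pos rfl] at h1
    have h2 : z * B v u = 0 := by linear_combination -h1
    exact (mul_ne_zero hz0 hβ) h2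
  let σ' : J → J := fun j => ⟨σ j.1, hσJ j⟩
  have hgS : ∀ j, g (swapMap L Vμ (b j)) = (-z) • Pi.single (σ' j) 1 := by
    intro j
    ext k
    rw [hgd, hEs, Pi.smul_apply, Pi.single_apply, smul_eq_mul]
    by_cases h : σ' j = k
    · have h' : σ j.1 = k.1 := congrArg Subtype.val h
      rw [if_pos h', if_pos h.symm]
      field_simp
    · have h' : σ j.1 ≠ k.1 := fun h' => h (Subtype.ext h')
      rw [if_neg h', if_neg (fun h' => h h'.symm)]
      simp
  have hgS' : ∀ j, g ((-(swapMap L Vμ)) (b j)) = z • Pi.single (σ' j) 1 := by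
    intro j
    rw [LinearMap.neg_apply, map_neg, hgS, neg_smul, neg_neg]
  have c1 := invol_count N (swapMap L Vμ) swap_swap hSN b hbN g hg hgb σ' (-z) hgS
  have c2 := invol_count N (-(swapMap L Vμ)) (fun t => by simp [swap_swap])
    (fun t ht => N.neg_mem (hSN t ht)) b hbN g hg hgb σ' z hgS'
  have hker : LinearMap.ker (-(swapMap L Vμ) - LinearMap.id) =
      LinearMap.ker (swapMap L Vμ + LinearMap.id) := by
    rw [← LinearMap.ker_neg, neg_sub, sub_neg_eq_add, add_comm]
  rw [hker] at c2
  have hσeq : ∀ j : J, σ' j = j ↔ ϖ (σ j.1) = ϖ j.1 := by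
    intro j
    constructor
    · intro h
      rw [show σ j.1 = j.1 from congrArg Subtype.val h]
    · intro h
      apply Subtype.ext
      change σ j.1 = j.1
      by_contra hne
      have h1 := congrArg (fun d => d (hc j.1)) h
      simp only [hϖ, if_neg hne, if_true] at h1
      exact zero_ne_one h1
  have hm1 : (-1 : ℂ) ≠ 1 := by norm_num
  constructor
  · apply Rat.cast_injective (α := ℂ)
    rw [Finset.sum_subtype (p := fun j => μ (hc j) ≠ 0) _ (fun j => by simp), Rat.cast_sum,
      Rat.cast_natCast]
    refine Eq.trans c1 (Finset.sum_congr rfl fun j _ => ?_)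
    by_cases h : ϖ (σ j.1) = ϖ j.1
    · rcases hz with hz | hz
      · have hs : ¬ IsSymplecticRep (L := L) Vμ := by
          rw [hsymp, hz]; exact hm1.symm
        simp [hσeq, h, hs, hz]
        try norm_num
      · have hs : IsSymplecticRep (L := L) Vμ := hsymp.mpr hz
        simp [hσeq, h, hs, hz]
        norm_num
    · simp [hσeq, h]
  · apply Rat.cast_injective (α := ℂ)
    rw [Finset.sum_subtype (p := fun j => μ (hc j) ≠ 0) _ (fun j => by simp), Rat.cast_sum,
      Rat.cast_natCast]
    refine Eq.trans c2 (Finset.sum_congr rfl fun j _ => ?_)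
    by_cases h : ϖ (σ j.1) = ϖ j.1
    · rcases hz with hz | hz
      · have hs : IsOrthogonalRep (L := L) Vμ := hort.mpr hz
        simp [hσeq, h, hs, hz]
        norm_num
      · have hs : ¬ IsOrthogonalRep (L := L) Vμ := by
          rw [hort, hz]; exact hm1
        simp [hσeq, h, hs, hz]
        try norm_num
    · simp [hσeq, h]

end AdjPaper
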